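/- arXiv:1912.02840 — 2 statements merged into one kernel-verified Lean document; each statement's English description precedes it below -/
import Mathlib

section
/- Every maximal almost rigid representation of Q has exactly 2n+3 indecomposable direct summands (which are pairwise non-isomorphic, since the representation is basic). -/
open scoped Classical

noncomputable section

namespace CambrianA

/-! ### Combinatorics of a type `A_{n+2}` quiver.

Vertices are `1, …, n+2`.  For `1 ≤ i ≤ n+1`, `ε i = true` means that the arrow between
`i` and `i+1` is oriented `i → i+1` (`i` is *upper-barred*), and `ε i = false` means it is
oriented `(i+1) → i` (`i` is *lower-barred*). -/

/-- `MaxIncr n ε i j` : the path `i → i+1 → ⋯ → j` is a maximal increasing path of `Q`. -/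
def MaxIncr (n : ℕ) (ε : ℕ → Bool) (i j : ℕ) : Prop :=
  1 ≤ i ∧ i ≤ j ∧ j ≤ n + 2 ∧ (∀ ℓ, i ≤ ℓ → ℓ < j → ε ℓ = true) ∧
    (i = 1 ∨ ε (i - 1) = false) ∧ (j = n + 2 ∨ ε j = false)

/-- `MaxDecr n ε i j` : the path `i → i-1 → ⋯ → j` is a maximal decreasing path of `Q`. -/
def MaxDecr (n : ℕ) (ε : ℕ → Bool) (i j : ℕ) : Prop :=
  1 ≤ j ∧ j ≤ i ∧ i ≤ n + 2 ∧ (∀ ℓ, j ≤ ℓ → ℓ < i → ε ℓ = false) ∧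
    (i = n + 2 ∨ ε i = true) ∧ (j = 1 ∨ ε (j - 1) = true)

/-- Vertices of the polygon lying on the lower boundary: `0`, `n+2` and lower-barred ones. -/
def LowerVertex (n : ℕ) (ε : ℕ → Bool) (x : ℕ) : Prop :=
  x = 0 ∨ x = n + 2 ∨ (1 ≤ x ∧ x ≤ n + 1 ∧ ε x = false)

/-- Vertices of the polygon lying on the upper boundary: `0`, `n+2` and upper-barred ones. -/
def UpperVertex (n : ℕ) (ε : ℕ → Bool) (x : ℕ) : Prop :=
  x = 0 ∨ x = n + 2 ∨ (1 ≤ x ∧ x ≤ n + 1 ∧ ε x = true)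

/-- `(a,b)` is a lower boundary edge: `a < b` are consecutive lower vertices. -/
def LowerEdge (n : ℕ) (ε : ℕ → Bool) (a b : ℕ) : Prop :=
  LowerVertex n ε a ∧ LowerVertex n ε b ∧ a < b ∧
    ∀ c, LowerVertex n ε c → ¬(a < c ∧ c < b)

/-- `(a,b)` is an upper boundary edge: `a < b` are consecutive upper vertices. -/
def UpperEdge (n : ℕ) (ε : ℕ → Bool) (a b : ℕ) : Prop :=
  UpperVertex n ε a ∧ UpperVertex n ε b ∧ a < b ∧
    ∀ c, UpperVertex n ε c → ¬(a < c ∧ c < b)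

def BoundaryEdge (n : ℕ) (ε : ℕ → Bool) (a b : ℕ) : Prop :=
  LowerEdge n ε a b ∨ UpperEdge n ε a b

/-- `IsHook n ε a lo hi` : the hook of the arrow of `Q` between `a` and `a+1` is the
maximal path supported on the interval `[lo, hi]`.
If `ε a = true` (arrow `a → a+1`, source `a`), the hook is the maximal decreasing path
starting at `a`; if `ε a = false` (arrow `a+1 → a`, source `a+1`), the hook is the
maximal increasing path starting at `a+1`. -/
def IsHook (n : ℕ) (ε : ℕ → Bool) (a lo hi : ℕ) : Prop :=
  if ε a = true then
    hi = a ∧ 1 ≤ lo ∧ lo ≤ a ∧ (∀ ℓ, lo ≤ ℓ → ℓ < a → ε ℓ = false) ∧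
      (lo = 1 ∨ ε (lo - 1) = true)
  else
    lo = a + 1 ∧ a + 1 ≤ hi ∧ hi ≤ n + 2 ∧ (∀ ℓ, a + 1 ≤ ℓ → ℓ < hi → ε ℓ = true) ∧
      (hi = n + 2 ∨ ε hi = false)

/-- `IsCohook n ε a lo hi` : the cohook of the arrow of `Q` between `a` and `a+1` is the
maximal path supported on the interval `[lo, hi]`, ending at the target of the arrow. -/
def IsCohook (n : ℕ) (ε : ℕ → Bool) (a lo hi : ℕ) : Prop :=
  if ε a = true then
    lo = a + 1 ∧ a + 1 ≤ hi ∧ hi ≤ n + 2 ∧ (∀ ℓ, a + 1 ≤ ℓ → ℓ < hi → ε ℓ = false) ∧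
      (hi = n + 2 ∨ ε hi = true)
  else
    hi = a ∧ 1 ≤ lo ∧ lo ≤ a ∧ (∀ ℓ, lo ≤ ℓ → ℓ < a → ε ℓ = true) ∧
      (lo = 1 ∨ ε (lo - 1) = false)

/-- Counterclockwise neighbor `R⁻¹(ℓ)` of the vertex `ℓ` of the polygon `P(Q)`, for the
cyclic order `0`, lower-barred vertices increasing, `n+2`, upper-barred vertices
decreasing. -/
def Rinv (n : ℕ) (ε : ℕ → Bool) (ℓ : ℕ) : ℕ :=
  if ℓ = n + 2 then sSup ({0} ∪ {x | 1 ≤ x ∧ x ≤ n + 1 ∧ ε x = true})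
  else if 1 ≤ ℓ ∧ ℓ ≤ n + 1 ∧ ε ℓ = true then
    sSup ({0} ∪ {x | 1 ≤ x ∧ x < ℓ ∧ ε x = true})
  else
    sInf ({n + 2} ∪ {x | ℓ < x ∧ x ≤ n + 1 ∧ ε x = false})

/-- `γ(i′,j′)` is a pivot of `γ(i,j)`. -/
def IsPivot (n : ℕ) (ε : ℕ → Bool) (i j i' j' : ℕ) : Prop :=
  (i' = Rinv n ε i ∧ j' = j ∧ Rinv n ε i < j) ∨
    (i' = i ∧ j' = Rinv n ε j ∧ i < Rinv n ε j)

/-! ### Geometry of the polygon `P(Q)`.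

The plane is identified with `ℂ`; `p x` is the vertex of the polygon labeled `x`,
for `0 ≤ x ≤ n+2`. -/

/-- The hypotheses on the points `p 0, …, p (n+2)` realizing the polygon `P(Q)`:
strictly increasing `x`-coordinates; `p 0` and `p (n+2)` on a common horizontal line `L`;
upper-barred vertices above `L`, lower-barred vertices below `L`; convex position. -/
def PolyPts (n : ℕ) (ε : ℕ → Bool) (p : ℕ → ℂ) : Prop :=
  (∀ a b, a < b → b ≤ n + 2 → (p a).re < (p b).re) ∧
    (p (n + 2)).im = (p 0).im ∧
    (∀ i, 1 ≤ i → i ≤ n + 1 →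
      (ε i = true → (p 0).im < (p i).im) ∧ (ε i = false → (p i).im < (p 0).im)) ∧
    ∀ i, i ≤ n + 2 → p i ∉ convexHull ℝ (p '' {j | j ≤ n + 2 ∧ j ≠ i})

/-- The line segment `γ(e.1, e.2)` of the polygon. -/
def Seg (p : ℕ → ℂ) (e : ℕ × ℕ) : Set ℂ := segment ℝ (p e.1) (p e.2)

/-- Two segments cross when they intersect in a point that is not a common endpoint. -/
def Cross (p : ℕ → ℂ) (e f : ℕ × ℕ) : Prop :=
  ∃ z, z ∈ Seg p e ∧ z ∈ Seg p f ∧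
    ¬((z = p e.1 ∨ z = p e.2) ∧ (z = p f.1 ∨ z = p f.2))

/-- Slope of the segment `γ(e.1, e.2)`. -/
def slope (p : ℕ → ℂ) (e : ℕ × ℕ) : ℝ :=
  ((p e.2).im - (p e.1).im) / ((p e.2).re - (p e.1).re)

def ValidPair (n : ℕ) (e : ℕ × ℕ) : Prop := e.1 < e.2 ∧ e.2 ≤ n + 2

/-- A triangulation of `P(Q)`: a maximal collection of pairwise noncrossing segments. -/
def IsTriangulation (n : ℕ) (p : ℕ → ℂ) (T : Finset (ℕ × ℕ)) : Prop :=
  (∀ e ∈ T, ValidPair n e) ∧ (∀ e ∈ T, ∀ f ∈ T, e ≠ f → ¬Cross p e f) ∧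
    ∀ e, ValidPair n e → e ∉ T → ∃ f ∈ T, Cross p e f

/-- Cross product of two planar vectors; positive iff `(u, v)` is counterclockwise. -/
def cross2 (u v : ℂ) : ℝ := u.re * v.im - u.im * v.re

/-- Arrows of the adjacency quiver `Q(T)` of a triangulation `T`: `e → f` whenever
`e` and `f` are sides of a common triangle of `T` and `f` follows `e` going
counterclockwise around that triangle. -/
def TriArrow (p : ℕ → ℂ) (T : Finset (ℕ × ℕ)) (e f : ℕ × ℕ) : Prop :=
  ∃ a b c : ℕ, a < b ∧ b < c ∧ (a, b) ∈ T ∧ (b, c) ∈ T ∧ (a, c) ∈ T ∧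
    ((0 < cross2 (p b - p a) (p c - p a) ∧
        ((e = (a, b) ∧ f = (b, c)) ∨ (e = (b, c) ∧ f = (a, c)) ∨
          (e = (a, c) ∧ f = (a, b)))) ∨
      (cross2 (p b - p a) (p c - p a) < 0 ∧
        ((e = (a, c) ∧ f = (b, c)) ∨ (e = (b, c) ∧ f = (a, b)) ∨
          (e = (a, b) ∧ f = (a, c)))))

/-! ### Representations of `Q` -/

/-- A finite dimensional representation of the quiver `Q` of type `A_{n+2}` over `k`.
The vector spaces are indexed by `ℕ`, and are required to vanish outside the set
`{1, …, n+2}` of vertices of `Q`.  For each `i`, `fwd i : V i → V (i+1)` is the structure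
map of the arrow `i → i+1` (it is required to vanish when the arrow is oriented in the
other direction, i.e. `ε i = false`) and `bwd i : V (i+1) → V i` is the structure map of
the arrow `i+1 → i` (required to vanish when `ε i = true`). -/
structure ARep (k : Type) [Field k] (n : ℕ) (ε : ℕ → Bool) where
  V : ℕ → Type
  [acg : ∀ x, AddCommGroup (V x)]
  [mod : ∀ x, Module k (V x)]
  [fdim : ∀ x, FiniteDimensional k (V x)]
  triv : ∀ x, x = 0 ∨ n + 2 < x → ∀ v : V x, v = 0
  fwd : ∀ i, V i →ₗ[k] V (i + 1)
  bwd : ∀ i, V (i + 1) →ₗ[k] V i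
  fwd_zero : ∀ i, ε i = false → fwd i = 0
  bwd_zero : ∀ i, ε i = true → bwd i = 0

attribute [instance] ARep.acg ARep.mod ARep.fdim

variable {k : Type} [Field k] {n : ℕ} {ε : ℕ → Bool}

/-- Morphisms of representations. -/
@[ext]
structure ARep.Hom (M N : ARep k n ε) where
  app : ∀ x, M.V x →ₗ[k] N.V x
  comm_fwd : ∀ i (v : M.V i), app (i + 1) (M.fwd i v) = N.fwd i (app i v)
  comm_bwd : ∀ i (v : M.V (i + 1)), app i (M.bwd i v) = N.bwd i (app (i + 1) v)

/-- The identity morphism. -/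
def ARep.Hom.id (M : ARep k n ε) : M.Hom M :=
  ⟨fun _ => LinearMap.id, fun _ _ => rfl, fun _ _ => rfl⟩

/-- Composition of morphisms. -/
def ARep.Hom.comp {M N P : ARep k n ε} (g : N.Hom P) (f : M.Hom N) : M.Hom P where
  app x := (g.app x).comp (f.app x)
  comm_fwd i v := by simp only [LinearMap.comp_apply, f.comm_fwd, g.comm_fwd]
  comm_bwd i v := by simp only [LinearMap.comp_apply, f.comm_bwd, g.comm_bwd]

/-- Sum of two morphisms. -/
def ARep.Hom.add {M N : ARep k n ε} (f g : M.Hom N) : M.Hom N where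
  app x := f.app x + g.app x
  comm_fwd i v := by
    simp only [LinearMap.add_apply, f.comm_fwd, g.comm_fwd, map_add]
  comm_bwd i v := by
    simp only [LinearMap.add_apply, f.comm_bwd, g.comm_bwd, map_add]

/-- Scalar multiple of a morphism. -/
def ARep.Hom.smul {M N : ARep k n ε} (c : k) (f : M.Hom N) : M.Hom N where
  app x := c • f.app x
  comm_fwd i v := by simp only [LinearMap.smul_apply, f.comm_fwd, map_smul]
  comm_bwd i v := by simp only [LinearMap.smul_apply, f.comm_bwd, map_smul]

/-- Isomorphism of representations. -/
def ARep.Iso (M N : ARep k n ε) : Prop :=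
  ∃ f : M.Hom N, ∀ x, Function.Bijective (f.app x)

/-- The zero representation(s). -/
def ARep.IsZero (M : ARep k n ε) : Prop := ∀ x, ∀ v : M.V x, v = 0

/-- The support of a representation. -/
def ARep.supp (M : ARep k n ε) : Set ℕ := {x | ∃ v : M.V x, v ≠ 0}

/-- Direct sum of two representations. -/
def ARep.dsum (M N : ARep k n ε) : ARep k n ε where
  V x := M.V x × N.V x
  acg _ := by infer_instance
  mod _ := by infer_instance
  fdim _ := by infer_instance
  triv x hx v := by
    have h1 := M.triv x hx v.1
    have h2 := N.triv x hx v.2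
    exact Prod.ext h1 h2
  fwd i := (M.fwd i).prodMap (N.fwd i)
  bwd i := (M.bwd i).prodMap (N.bwd i)
  fwd_zero i h := by
    show (M.fwd i).prodMap (N.fwd i) = 0
    rw [M.fwd_zero i h, N.fwd_zero i h]
    apply LinearMap.ext; rintro ⟨a, b⟩; simp
  bwd_zero i h := by
    show (M.bwd i).prodMap (N.bwd i) = 0
    rw [M.bwd_zero i h, N.bwd_zero i h]
    apply LinearMap.ext; rintro ⟨a, b⟩; simp

/-- One dimensional space `k` if `P` holds, `0` otherwise (as a submodule of `k`). -/
def fiber (k : Type) [Field k] (P : Prop) : Submodule k k := if P then ⊤ else ⊥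

/-- The canonical map `fiber k P → fiber k Q` : "identity" if `P ∧ Q`, zero otherwise. -/
def fiberMap (k : Type) [Field k] (P Q : Prop) : fiber k P →ₗ[k] fiber k Q :=
  if h : P ∧ Q then
    { toFun := fun v => ⟨(v : k), by
        rw [show fiber k Q = ⊤ from if_pos h.2]; exact Submodule.mem_top⟩
      map_add' := fun _ _ => rfl
      map_smul' := fun _ _ => rfl }
  else 0

/-- The zero representation. -/
def zeroRep (k : Type) [Field k] (n : ℕ) (ε : ℕ → Bool) : ARep k n ε where
  V _ := ↥(fiber k False)
  acg _ := by infer_instance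
  mod _ := by infer_instance
  fdim _ := by infer_instance
  triv x _ v := by
    have hfib : fiber k False = ⊥ := if_neg (fun h : False => h.elim)
    obtain ⟨w, hw⟩ := v
    apply Subtype.ext
    have hb : w ∈ (⊥ : Submodule k k) := hfib ▸ hw
    exact (Submodule.mem_bot k).mp hb
  fwd _ := 0
  bwd _ := 0
  fwd_zero _ _ := rfl
  bwd_zero _ _ := rfl

/-- The condition for a vertex `x` to be in the support of the interval representation
`M(i,j)`. -/
def SuppCond (n i j x : ℕ) : Prop := i ≤ x ∧ x ≤ j ∧ 1 ≤ x ∧ x ≤ n + 2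

/-- The interval (string) representation `M(i,j)` of `Q`: one dimensional at each vertex
`x` with `i ≤ x ≤ j`, zero elsewhere, with identity maps on all arrows whose endpoints
both lie in `[i,j]`. -/
def intervalRep (k : Type) [Field k] (n : ℕ) (ε : ℕ → Bool) (i j : ℕ) : ARep k n ε where
  V x := ↥(fiber k (SuppCond n i j x))
  acg _ := by infer_instance
  mod _ := by infer_instance
  fdim _ := by infer_instance
  triv x hx v := by
    have hP : ¬SuppCond n i j x := by simp only [SuppCond]; omega
    have hfib : fiber k (SuppCond n i j x) = ⊥ := if_neg hP
    obtain ⟨w, hw⟩ := v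
    apply Subtype.ext
    have hb : w ∈ (⊥ : Submodule k k) := hfib ▸ hw
    exact (Submodule.mem_bot k).mp hb
  fwd ℓ :=
    if ε ℓ = true then fiberMap k (SuppCond n i j ℓ) (SuppCond n i j (ℓ + 1)) else 0
  bwd ℓ :=
    if ε ℓ = true then 0 else fiberMap k (SuppCond n i j (ℓ + 1)) (SuppCond n i j ℓ)
  fwd_zero ℓ h := by simp [h]
  bwd_zero ℓ h := by simp [h]

/-- Direct sum of a list of representations. -/
def dsumList (k : Type) [Field k] (n : ℕ) (ε : ℕ → Bool) :
    List (ARep k n ε) → ARep k n ε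
  | [] => zeroRep k n ε
  | M :: L => M.dsum (dsumList k n ε L)

/-- Indecomposable representations. -/
def ARep.Indec (M : ARep k n ε) : Prop :=
  ¬M.IsZero ∧ ∀ A B : ARep k n ε, M.Iso (A.dsum B) → A.IsZero ∨ B.IsZero

/-- `A` is a direct summand of `T`. -/
def ARep.IsSummand (A T : ARep k n ε) : Prop := ∃ B : ARep k n ε, T.Iso (A.dsum B)

/-- A representation is basic when it has no repeated indecomposable direct summand. -/
def ARep.Basic (T : ARep k n ε) : Prop :=
  ∀ A : ARep k n ε, A.Indec → ¬(A.dsum A).IsSummand T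

/-- A short exact sequence `0 → B → E → A → 0`. -/
structure SES (B A : ARep k n ε) where
  E : ARep k n ε
  ι : B.Hom E
  π : E.Hom A
  inj : ∀ x, Function.Injective (ι.app x)
  surj : ∀ x, Function.Surjective (π.app x)
  exct : ∀ x (v : E.V x), π.app x v = 0 ↔ ∃ u, ι.app x u = v

/-- A short exact sequence splits. -/
def SES.Splits {B A : ARep k n ε} (σ : SES B A) : Prop :=
  ∃ r : σ.E.Hom B, ∀ x (v : B.V x), r.app x (σ.ι.app x v) = v

/-- `Ext¹(A, B) = 0` : every short exact sequence `0 → B → E → A → 0` splits. -/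
def ExtZero (A B : ARep k n ε) : Prop := ∀ σ : SES B A, σ.Splits

/-- `Ext¹(A,B) ≅ k`, generated by (the class of) a short exact sequence
`0 → B → E → A → 0` with indecomposable middle term `E`: there is a non-split such
sequence `σ` with `σ.E` indecomposable such that every non-split sequence is equivalent
to a nonzero scalar multiple of `σ`. -/
def ExtOneDimIndecMid (A B : ARep k n ε) : Prop :=
  ∃ σ : SES B A, ¬σ.Splits ∧ σ.E.Indec ∧
    ∀ τ : SES B A, ¬τ.Splits → ∃ c : k, c ≠ 0 ∧
      ∃ φ : σ.E.Hom τ.E, (∀ x, Function.Bijective (φ.app x)) ∧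
        (∀ x (v : B.V x), φ.app x (σ.ι.app x v) = τ.ι.app x v) ∧
        (∀ x (v : σ.E.V x), τ.π.app x (φ.app x v) = c • σ.π.app x v)

/-- Almost rigid representations. -/
def AlmostRigid (T : ARep k n ε) : Prop :=
  T.Basic ∧ ∀ A B : ARep k n ε, A.Indec → B.Indec → A.IsSummand T → B.IsSummand T →
    ExtZero A B ∨ ExtOneDimIndecMid A B

/-- Maximal almost rigid representations. -/
def MaxAlmostRigid (T : ARep k n ε) : Prop :=
  AlmostRigid T ∧ ∀ M : ARep k n ε, ¬M.IsZero → ¬AlmostRigid (T.dsum M)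

/-- `f` is a section. -/
def ARep.Hom.IsSection {M N : ARep k n ε} (f : M.Hom N) : Prop :=
  ∃ g : N.Hom M, ∀ x (v : M.V x), g.app x (f.app x v) = v

/-- `f` is a retraction. -/
def ARep.Hom.IsRetraction {M N : ARep k n ε} (f : M.Hom N) : Prop :=
  ∃ g : N.Hom M, ∀ x (v : N.V x), f.app x (g.app x v) = v

/-- Irreducible morphisms: `f` is neither a section nor a retraction, and in every
factorization `f = g ∘ h` either `h` is a section or `g` is a retraction. -/
def ARep.Hom.Irred {M N : ARep k n ε} (f : M.Hom N) : Prop :=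
  ¬f.IsSection ∧ ¬f.IsRetraction ∧
    ∀ (Z : ARep k n ε) (h : M.Hom Z) (g : Z.Hom N),
      (∀ x (v : M.V x), f.app x v = g.app x (h.app x v)) → h.IsSection ∨ g.IsRetraction

/-- Subrepresentations : families of subspaces closed under the structure maps. -/
structure Subrep (M : ARep k n ε) where
  U : ∀ x, Submodule k (M.V x)
  fwd_mem : ∀ i, ∀ v ∈ U i, M.fwd i v ∈ U (i + 1)
  bwd_mem : ∀ i, ∀ v ∈ U (i + 1), M.bwd i v ∈ U i

/-- The central charge `Z(M) = Σ_{x=1}^{n+2} dim_k(M_x) · (p_x − p_{x−1})`. -/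
def charge (p : ℕ → ℂ) (M : ARep k n ε) : ℂ :=
  ∑ x ∈ Finset.Icc 1 (n + 2), (Module.finrank k (M.V x) : ℂ) * (p x - p (x - 1))

/-- The central charge of a subrepresentation. -/
def subCharge (p : ℕ → ℂ) {M : ARep k n ε} (L : Subrep M) : ℂ :=
  ∑ x ∈ Finset.Icc 1 (n + 2), (Module.finrank k (L.U x) : ℂ) * (p x - p (x - 1))

/-- The representation `F(T) = ⊕_{γ(a,b) ∈ T} M(a+1, b)` attached to a collection `T` of
segments of the polygon `P(Q)`. -/
def FRep (k : Type) [Field k] (n : ℕ) (ε : ℕ → Bool) (T : Finset (ℕ × ℕ)) : ARep k n ε :=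
  dsumList k n ε (T.toList.map fun e => intervalRep k n ε (e.1 + 1) e.2)

end CambrianA

/-!
Every indecomposable representation of `Q` is an interval representation `M(a + 1, b)`, hence is
determined by a segment `γ(a, b)` joining two of the `n + 3` vertices of the polygon `P(Q)`.
An extension of one interval by another is a cochain on the arrows that leave the quotient and
enter the subobject, and it splits when it has a primitive. A primitive has to vanish
wherever one of the intervals is not defined, so the extension group is at most one-dimensional;
if the two intervals overlap, the middle term of the nonsplit extension is decomposable, and if
they are adjacent it is the interval obtained by joining them. The overlapping case is exactly
the one in which the two segments cross. Maximal almost rigid representations therefore correspond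
to the maximal sets of noncrossing chords of an `(n + 3)`-gon, edges included, and each of these
has `2 (n + 3) - 3` elements.
-/

namespace CambrianA

variable {k : Type} [Field k] {n : ℕ} {ε : ℕ → Bool}

/-! ### Arrows, morphisms and direct summands -/

/-- The source of the arrow between `i` and `i + 1`, oriented `i → i + 1` when `β = true` and
`i + 1 → i` when `β = false`. -/
def arrowSrc (β : Bool) (i : ℕ) : ℕ := bif β then i else i + 1

/-- The target of the arrow between `i` and `i + 1`, with the convention of `arrowSrc`. -/
def arrowTgt (β : Bool) (i : ℕ) : ℕ := bif β then i + 1 else i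

namespace ARep

/-- The structure maps `fwd` and `bwd` as a single family. The arrows of `Q` are the
`M.arrow (ε i) i`; the other orientation carries the zero map. -/
def arrow (M : ARep k n ε) : ∀ β i, M.V (arrowSrc β i) →ₗ[k] M.V (arrowTgt β i)
  | true, i => M.fwd i
  | false, i => M.bwd i

theorem arrow_eq_zero (M : ARep k n ε) {β : Bool} {i : ℕ} (h : β ≠ ε i) : M.arrow β i = 0 := by
  cases β
  · exact M.bwd_zero i (by simpa using h)
  · exact M.fwd_zero i (by simpa using h)

/-- The representation with structure maps `f (ε i) i`; the maps `f β i` with `β ≠ ε i` are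
discarded. -/
def ofArrows (V : ℕ → Type) [∀ x, AddCommGroup (V x)] [∀ x, Module k (V x)]
    [∀ x, FiniteDimensional k (V x)] (triv : ∀ x, x = 0 ∨ n + 2 < x → ∀ v : V x, v = 0)
    (f : ∀ β i, V (arrowSrc β i) →ₗ[k] V (arrowTgt β i)) : ARep k n ε where
  V := V
  triv := triv
  fwd i := if ε i = true then f true i else 0
  bwd i := if ε i = true then 0 else f false i
  fwd_zero i h := by simp [h]
  bwd_zero i h := by simp [h]

theorem ofArrows_arrow {V : ℕ → Type} [∀ x, AddCommGroup (V x)] [∀ x, Module k (V x)]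
    [∀ x, FiniteDimensional k (V x)] {triv : ∀ x, x = 0 ∨ n + 2 < x → ∀ v : V x, v = 0}
    {f : ∀ β i, V (arrowSrc β i) →ₗ[k] V (arrowTgt β i)} (i : ℕ) :
    (ofArrows (ε := ε) V triv f).arrow (ε i) i = f (ε i) i := by
  suffices ∀ β, ε i = β → (ofArrows (ε := ε) V triv f).arrow β i = f β i from this _ rfl
  rintro (_ | _) h
  · exact if_neg (by simp [h])
  · exact if_pos h

variable {A A' B B' M N P : ARep k n ε}

namespace Hom

theorem comm_arrow (f : M.Hom N) (β : Bool) (i : ℕ) (v : M.V (arrowSrc β i)) :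
    f.app _ (M.arrow β i v) = N.arrow β i (f.app _ v) := by
  cases β
  · exact f.comm_bwd i v
  · exact f.comm_fwd i v

/-- The morphism with given components, compatible with the arrows of `Q`. -/
def ofArrows (app : ∀ x, M.V x →ₗ[k] N.V x)
    (comm : ∀ i v, app _ (M.arrow (ε i) i v) = N.arrow (ε i) i (app _ v)) : M.Hom N :=
  have comm' : ∀ β i v, app _ (M.arrow β i v) = N.arrow β i (app _ v) := by
    intro β i
    rcases eq_or_ne β (ε i) with rfl | h
    · exact comm i
    · simp [arrow_eq_zero _ h]
  { app := app
    comm_fwd := comm' true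
    comm_bwd := comm' false }

/-- The inverse of a bijective morphism. -/
def inv (f : M.Hom N) (hf : ∀ x, Function.Bijective (f.app x)) : N.Hom M :=
  ofArrows (fun x => (LinearEquiv.ofBijective (f.app x) (hf x)).symm) fun i v => by
    obtain ⟨w, rfl⟩ := (hf _).2 v
    simp only [← f.comm_arrow, LinearEquiv.coe_coe, LinearEquiv.ofBijective_symm_apply_apply]

theorem inv_app_app (f : M.Hom N) (hf : ∀ x, Function.Bijective (f.app x)) (x : ℕ) (v : M.V x) :
    (f.inv hf).app x (f.app x v) = v :=
  LinearEquiv.ofBijective_symm_apply_apply _ v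

theorem app_inv_app (f : M.Hom N) (hf : ∀ x, Function.Bijective (f.app x)) (x : ℕ) (v : N.V x) :
    f.app x ((f.inv hf).app x v) = v :=
  LinearEquiv.apply_ofBijective_symm_apply (f.app x) (h := hf x) v

/-- The first projection of a direct sum. -/
def fst (A B : ARep k n ε) : (A.dsum B).Hom A where
  app x := LinearMap.fst k (A.V x) (B.V x)
  comm_fwd _ _ := rfl
  comm_bwd _ _ := rfl

/-- The second projection of a direct sum. -/
def snd (A B : ARep k n ε) : (A.dsum B).Hom B where
  app x := LinearMap.snd k (A.V x) (B.V x)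
  comm_fwd _ _ := rfl
  comm_bwd _ _ := rfl

/-- The morphism into a direct sum with given components. -/
def pair (f : M.Hom A) (g : M.Hom B) : M.Hom (A.dsum B) where
  app x := (f.app x).prod (g.app x)
  comm_fwd i v := Prod.ext (f.comm_fwd i v) (g.comm_fwd i v)
  comm_bwd i v := Prod.ext (f.comm_bwd i v) (g.comm_bwd i v)

/-- The zero morphism. -/
def zero (A B : ARep k n ε) : A.Hom B where
  app _ := 0
  comm_fwd _ _ := by simp
  comm_bwd _ _ := by simp

/-- The first inclusion into a direct sum. -/
def inl (A B : ARep k n ε) : A.Hom (A.dsum B) := (Hom.id A).pair (zero A B)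

/-- The second inclusion into a direct sum. -/
def inr (A B : ARep k n ε) : B.Hom (A.dsum B) := (zero B A).pair (Hom.id B)

/-- The kernel of a morphism. -/
def ker (f : M.Hom N) : ARep k n ε :=
  ARep.ofArrows (fun x => LinearMap.ker (f.app x)) (fun x hx v => Subtype.ext (M.triv x hx v))
    fun β i => (M.arrow β i).restrict fun v (hv : f.app _ v = 0) => by
      rw [LinearMap.mem_ker, f.comm_arrow, hv, map_zero]

theorem ker_arrow (f : M.Hom N) (i : ℕ) (v : f.ker.V (arrowSrc (ε i) i)) :
    (f.ker.arrow (ε i) i v).1 = M.arrow (ε i) i v.1 :=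
  congrArg Subtype.val (LinearMap.congr_fun (ofArrows_arrow i) v)

/-- The inclusion of the kernel. -/
def kerSubtype (f : M.Hom N) : f.ker.Hom M :=
  ofArrows (fun x => (LinearMap.ker (f.app x)).subtype) f.ker_arrow

/-- A morphism annihilated by `f` factors through the kernel of `f`. -/
def kerLift (f : M.Hom N) (g : P.Hom M) (h : ∀ x v, f.app x (g.app x v) = 0) : P.Hom f.ker :=
  ofArrows (fun x => (g.app x).codRestrict (LinearMap.ker (f.app x)) (h x)) fun i v =>
    Subtype.ext ((g.comm_arrow _ i v).trans (f.ker_arrow i ⟨g.app _ v, h _ v⟩).symm)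

/-- The complement `1 - p` of an endomorphism `p`. -/
def compl (p : M.Hom M) : M.Hom M := (Hom.id M).add (p.smul (-1))

theorem compl_app (p : M.Hom M) (x : ℕ) (v : M.V x) : p.compl.app x v = v - p.app x v := by
  rw [sub_eq_add_neg, ← neg_one_smul k]; rfl

end Hom

theorem Iso.of_inverse (f : M.Hom N) (g : N.Hom M) (hgf : ∀ x v, g.app x (f.app x v) = v)
    (hfg : ∀ x v, f.app x (g.app x v) = v) : M.Iso N :=
  ⟨f, fun x => ⟨Function.LeftInverse.injective (hgf x), Function.RightInverse.surjective (hfg x)⟩⟩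

theorem Iso.symm (h : M.Iso N) : N.Iso M := by
  obtain ⟨f, hf⟩ := h
  exact .of_inverse (f.inv hf) f (f.app_inv_app hf) (f.inv_app_app hf)

theorem iso_dsum_ker {q : A.Hom M} {p : M.Hom A} (h : ∀ x v, p.app x (q.app x v) = v) :
    M.Iso (A.dsum p.ker) := by
  have hp : ∀ x v, p.app x ((q.comp p).compl.app x v) = 0 := fun x v => by
    rw [Hom.compl_app, map_sub]
    exact sub_eq_zero.2 (h x _).symm
  refine ⟨p.pair (p.kerLift _ hp), fun x => ⟨?_, ?_⟩⟩
  · rw [injective_iff_map_eq_zero]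
    intro v hv
    have hv₁ : p.app x v = 0 := congrArg Prod.fst hv
    have hv₂ : (q.comp p).compl.app x v = 0 := congrArg (fun w => w.2.1) hv
    rwa [Hom.compl_app, show (q.comp p).app x v = q.app x (p.app x v) from rfl, hv₁, map_zero,
      sub_zero] at hv₂
  · rintro ⟨a, b, hb : p.app x b = 0⟩
    have hab : p.app x (q.app x a + b) = a := by rw [map_add, h, hb, add_zero]
    refine ⟨q.app x a + b, Prod.ext hab (Subtype.ext ?_)⟩
    change (q.comp p).compl.app x (q.app x a + b) = b
    rw [Hom.compl_app, show (q.comp p).app x _ = q.app x (p.app x _) from rfl, hab,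
      add_sub_cancel_left]

theorem isSummand_iff_exists_retraction :
    A.IsSummand M ↔ ∃ (q : A.Hom M) (p : M.Hom A), ∀ x v, p.app x (q.app x v) = v := by
  constructor
  · rintro ⟨B, f, hf⟩
    exact ⟨(f.inv hf).comp (Hom.inl A B), (Hom.fst A B).comp f, fun x v =>
      congrArg Prod.fst (f.app_inv_app hf x ((Hom.inl A B).app x v))⟩
  · rintro ⟨q, p, h⟩
    exact ⟨p.ker, iso_dsum_ker h⟩

namespace IsSummand

theorem trans (hAB : A.IsSummand B) (hBM : B.IsSummand M) : A.IsSummand M := by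
  rw [isSummand_iff_exists_retraction] at *
  obtain ⟨q, p, h⟩ := hAB
  obtain ⟨q', p', h'⟩ := hBM
  exact ⟨q'.comp q, p.comp p', fun x v => (congrArg (p.app x) (h' x _)).trans (h x v)⟩

theorem refl (A : ARep k n ε) : A.IsSummand A :=
  isSummand_iff_exists_retraction.2 ⟨Hom.id A, Hom.id A, fun _ _ => rfl⟩

theorem inl (A B : ARep k n ε) : A.IsSummand (A.dsum B) :=
  isSummand_iff_exists_retraction.2 ⟨Hom.inl A B, Hom.fst A B, fun _ _ => rfl⟩

theorem inr (A B : ARep k n ε) : B.IsSummand (A.dsum B) :=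
  isSummand_iff_exists_retraction.2 ⟨Hom.inr A B, Hom.snd A B, fun _ _ => rfl⟩

theorem swap (A B : ARep k n ε) : (A.dsum B).IsSummand (B.dsum A) :=
  isSummand_iff_exists_retraction.2
    ⟨(Hom.snd A B).pair (Hom.fst A B), (Hom.snd B A).pair (Hom.fst B A), fun _ _ => rfl⟩

theorem dsum (hA : A.IsSummand A') (hB : B.IsSummand B') :
    (A.dsum B).IsSummand (A'.dsum B') := by
  rw [isSummand_iff_exists_retraction] at *
  obtain ⟨q, p, h⟩ := hA
  obtain ⟨q', p', h'⟩ := hB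
  exact ⟨(q.comp (Hom.fst A B)).pair (q'.comp (Hom.snd A B)),
    (p.comp (Hom.fst A' B')).pair (p'.comp (Hom.snd A' B')),
    fun x v => Prod.ext (h x v.1) (h' x v.2)⟩

end IsSummand

theorem Iso.isSummand (h : M.Iso N) : M.IsSummand N := by
  obtain ⟨f, hf⟩ := h
  exact isSummand_iff_exists_retraction.2 ⟨f, f.inv hf, f.inv_app_app hf⟩

theorem Indec.iso_of_isSummand (hM : M.Indec) (hA : ¬A.IsZero) (h : A.IsSummand M) :
    M.Iso A := by
  obtain ⟨B, f, hf⟩ := h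
  have hB : B.IsZero := (hM.2 A B ⟨f, hf⟩).resolve_left hA
  have hfst x : Function.Bijective ((Hom.fst A B).app x) :=
    ⟨fun u v huv => Prod.ext huv ((hB x _).trans (hB x _).symm), Prod.fst_surjective⟩
  exact ⟨(Hom.fst A B).comp f, fun x => (hfst x).comp (hf x)⟩

theorem Indec.eq_zero_or_eq_id_of_idempotent (hM : M.Indec) {p : M.Hom M}
    (hp : ∀ x v, p.app x (p.app x v) = p.app x v) :
    (∀ x v, p.app x v = 0) ∨ ∀ x v, p.app x v = v := by
  have hcompl : ∀ x v, p.compl.app x (p.app x v) = 0 := fun x v => by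
    rw [Hom.compl_app, hp, sub_self]
  have hsplit : ∀ x v,
      (p.compl.kerLift p hcompl).app x (p.compl.kerSubtype.app x v) = v := fun x v => by
    have hv : v.1 - p.app x v.1 = 0 := (p.compl_app x v.1).symm.trans v.2
    exact Subtype.ext (sub_eq_zero.1 hv).symm
  refine (hM.2 _ _ (iso_dsum_ker hsplit)).imp (fun h x v => ?_) fun h x v => ?_
  · exact congrArg Subtype.val (h x ⟨p.app x v, hcompl x v⟩)
  · have hv : p.app x (v - p.app x v) = 0 := by rw [map_sub, hp, sub_self]
    have := congrArg Subtype.val (h x ⟨v - p.app x v, Subtype.ext hv⟩)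
    exact (sub_eq_zero.1 this).symm

end ARep

theorem isSummand_dsumList_of_mem {A : ARep k n ε} {L : List (ARep k n ε)} (h : A ∈ L) :
    A.IsSummand (dsumList k n ε L) := by
  induction L with
  | nil => simp at h
  | cons M L ih =>
    rcases List.mem_cons.1 h with rfl | h
    · exact .inl _ _
    · exact (ih h).trans (.inr _ _)

theorem isSummand_dsumList_of_sublist {K L : List (ARep k n ε)} (h : K.Sublist L) :
    (dsumList k n ε K).IsSummand (dsumList k n ε L) := by
  induction h with
  | slnil => exact .refl _
  | cons M _ ih => exact ih.trans (.inr M _)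
  | cons_cons M _ ih => exact .dsum (.refl M) ih

/-! ### Interval representations -/

theorem arrowSrc_arrowTgt (β : Bool) (i : ℕ) :
    arrowSrc β i = i ∧ arrowTgt β i = i + 1 ∨ arrowSrc β i = i + 1 ∧ arrowTgt β i = i := by
  cases β <;> simp [arrowSrc, arrowTgt]

/-- A basis exhibiting `M` as an interval representation with support `a + 1, …, b`, that is, as
the representation attached to the segment `γ(a, b)`; `vec` and `coord` vanish off the
support. -/
structure IntervalBasis (M : ARep k n ε) (a b : ℕ) where
  vec : ∀ x, M.V x
  coord : ∀ x, M.V x →ₗ[k] k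
  vec_eq_zero : ∀ x, ¬(a < x ∧ x ≤ b) → vec x = 0
  coord_smul_vec : ∀ x v, coord x v • vec x = v
  coord_vec : ∀ x, a < x → x ≤ b → coord x (vec x) = 1
  arrow_vec : ∀ i, a < i → i < b → M.arrow (ε i) i (vec _) = vec _

/-- The segment `(a, b)` such that the support of `M` spans `a + 1, …, b`; a junk value when `M`
is zero. -/
def ARep.endpoints (M : ARep k n ε) : ℕ × ℕ := (sInf M.supp - 1, sSup M.supp)

theorem ARep.Iso.endpoints_eq {M N : ARep k n ε} (h : M.Iso N) : M.endpoints = N.endpoints := by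
  obtain ⟨f, hf⟩ := h
  have hsupp : M.supp = N.supp := Set.ext fun x => by
    constructor
    · rintro ⟨v, hv⟩
      exact ⟨f.app x v, fun h => hv ((hf x).1 (h.trans (map_zero _).symm))⟩
    · rintro ⟨w, hw⟩
      obtain ⟨v, rfl⟩ := (hf x).2 w
      exact ⟨v, fun h => hw (by rw [h, map_zero])⟩
  rw [endpoints, endpoints, hsupp]

namespace IntervalBasis

variable {M N : ARep k n ε} {a b : ℕ}

theorem eq_zero (h : IntervalBasis M a b) {x : ℕ} (hx : ¬(a < x ∧ x ≤ b)) (v : M.V x) :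
    v = 0 := by
  rw [← h.coord_smul_vec x v, h.vec_eq_zero x hx, smul_zero]

theorem vec_ne_zero (h : IntervalBasis M a b) {x : ℕ} (ha : a < x) (hb : x ≤ b) :
    h.vec x ≠ 0 := fun h0 => by
  simpa [h0] using h.coord_vec x ha hb

theorem arrow_apply (h : IntervalBasis M a b) (i : ℕ) (v : M.V (arrowSrc (ε i) i)) :
    M.arrow (ε i) i v = if a < i ∧ i < b then h.coord _ v • h.vec _ else 0 := by
  split_ifs with hi
  · rw [← h.arrow_vec i hi.1 hi.2, ← map_smul, h.coord_smul_vec]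
  · have hends : ¬(a < arrowSrc (ε i) i ∧ arrowSrc (ε i) i ≤ b) ∨
        ¬(a < arrowTgt (ε i) i ∧ arrowTgt (ε i) i ≤ b) := by
      have := arrowSrc_arrowTgt (ε i) i
      omega
    rcases hends with hsrc | htgt
    · rw [h.eq_zero hsrc v, map_zero]
    · exact h.eq_zero htgt _

theorem endpoints_eq (h : IntervalBasis M a b) (hab : a < b) : M.endpoints = (a, b) := by
  have hsupp : M.supp = Set.Icc (a + 1) b := Set.ext fun x => by
    refine ⟨fun ⟨v, hv⟩ => ?_, fun hx => ⟨h.vec x, h.vec_ne_zero hx.1 hx.2⟩⟩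
    by_contra hx
    exact hv (h.eq_zero hx v)
  rw [ARep.endpoints, hsupp, csInf_Icc hab, csSup_Icc hab, Nat.add_sub_cancel]

/-- The basis-preserving morphism between interval representations with the same support. -/
def hom (h : IntervalBasis M a b) (h' : IntervalBasis N a b) : M.Hom N :=
  .ofArrows (fun x => (h.coord x).smulRight (h'.vec x)) fun i v => by
    rw [h.arrow_apply, h'.arrow_apply]
    split_ifs with hi
    · have hsrc : a < arrowSrc (ε i) i ∧ arrowSrc (ε i) i ≤ b := by
        have := arrowSrc_arrowTgt (ε i) i
        omega
      have htgt : a < arrowTgt (ε i) i ∧ arrowTgt (ε i) i ≤ b := by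
        have := arrowSrc_arrowTgt (ε i) i
        omega
      simp [h.coord_vec _ htgt.1 htgt.2, h'.coord_vec _ hsrc.1 hsrc.2]
    · simp

theorem hom_hom (h : IntervalBasis M a b) (h' : IntervalBasis N a b) (x : ℕ) (v : M.V x) :
    (h'.hom h).app x ((h.hom h').app x v) = v := by
  change h'.coord x (h.coord x v • h'.vec x) • h.vec x = v
  by_cases hx : a < x ∧ x ≤ b
  · rw [map_smul, h'.coord_vec x hx.1 hx.2, smul_eq_mul, mul_one, h.coord_smul_vec]
  · exact (h.eq_zero hx _).trans (h.eq_zero hx _).symm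

theorem iso (h : IntervalBasis M a b) (h' : IntervalBasis N a b) : M.Iso N :=
  .of_inverse (h.hom h') (h'.hom h) (h.hom_hom h') (h'.hom_hom h)

theorem exists_app_vec_eq_smul (h : IntervalBasis M a b) (h' : IntervalBasis N a b)
    (f : M.Hom N) : ∃ c : k, ∀ x, f.app x (h.vec x) = c • h'.vec x := by
  let t x := h'.coord x (f.app x (h.vec x))
  have ht x : t x • h'.vec x = f.app x (h.vec x) := h'.coord_smul_vec _ _
  have harrow i (ha : a < i) (hb : i < b) : t (arrowTgt (ε i) i) = t (arrowSrc (ε i) i) := by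
    have htgt : a < arrowTgt (ε i) i ∧ arrowTgt (ε i) i ≤ b := by
      have := arrowSrc_arrowTgt (ε i) i
      omega
    change h'.coord _ (f.app _ (h.vec _)) = _
    rw [← h.arrow_vec i ha hb, f.comm_arrow, ← ht, map_smul, h'.arrow_vec i ha hb, map_smul,
      h'.coord_vec _ htgt.1 htgt.2, smul_eq_mul, mul_one]
  have hconst x (ha : a + 1 ≤ x) : x ≤ b → t x = t (a + 1) := by
    induction x, ha using Nat.le_induction with
    | base => exact fun _ => rfl
    | succ x ha ih =>
      intro hb
      have := harrow x ha hb
      rcases arrowSrc_arrowTgt (ε x) x with ⟨hs, ht⟩ | ⟨hs, ht⟩ <;> rw [hs, ht] at this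
      · exact this.trans (ih (by omega))
      · exact this.symm.trans (ih (by omega))
  refine ⟨t (a + 1), fun x => ?_⟩
  by_cases hx : a < x ∧ x ≤ b
  · rw [← hconst x hx.1 hx.2, ht]
  · exact (h'.eq_zero hx _).trans (h'.eq_zero hx _).symm

theorem exists_app_eq_smul (h : IntervalBasis M a b) (f : M.Hom M) :
    ∃ c : k, ∀ x v, f.app x v = c • v := by
  obtain ⟨c, hc⟩ := h.exists_app_vec_eq_smul h f
  refine ⟨c, fun x v => ?_⟩
  rw [← h.coord_smul_vec x v, map_smul, hc, smul_comm]

theorem not_isZero (h : IntervalBasis M a b) (hab : a < b) : ¬M.IsZero := fun hM =>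
  h.vec_ne_zero hab le_rfl (hM b _)

theorem indec (h : IntervalBasis M a b) (hab : a < b) : M.Indec := by
  refine ⟨h.not_isZero hab, ?_⟩
  rintro A B ⟨f, hf⟩
  obtain ⟨c, hc⟩ := h.exists_app_eq_smul
    ((f.inv hf).comp ((ARep.Hom.inl A B).comp ((ARep.Hom.fst A B).comp f)))
  have hproj x (z : (A.dsum B).V x) :
      (ARep.Hom.inl A B).app x ((ARep.Hom.fst A B).app x z) = c • z := by
    obtain ⟨w, rfl⟩ := (hf x).2 z
    rw [← map_smul, ← hc x w]
    exact (f.app_inv_app hf x _).symm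
  by_cases h0 : c = 0
  · subst h0
    exact .inl fun x u => (congrArg Prod.fst (hproj x (u, 0))).trans (zero_smul k u)
  · refine .inr fun x v => (smul_eq_zero_iff_right h0).1 ?_
    exact (congrArg Prod.snd (hproj x (0, v))).symm

end IntervalBasis

theorem fiberMap_coe (P Q : Prop) (v : fiber k P) :
    (fiberMap k P Q v : k) = if P ∧ Q then (v : k) else 0 := by
  unfold fiberMap
  split_ifs <;> rfl

theorem mem_fiber {P : Prop} (h : P) (c : k) : c ∈ fiber k P :=
  (if_pos h : fiber k P = ⊤).ge Submodule.mem_top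

theorem fiber_eq_zero {P : Prop} (h : ¬P) (v : fiber k P) : (v : k) = 0 :=
  (Submodule.mem_bot k).1 ((if_neg h : fiber k P = ⊥).le v.2)

/-- The standard basis of the interval representation `M(a + 1, b)`. -/
def intervalRepBasis {a b : ℕ} (hb : b ≤ n + 2) :
    IntervalBasis (intervalRep k n ε (a + 1) b) a b where
  vec x := ⟨if SuppCond n (a + 1) b x then 1 else 0, by
    split_ifs with hx
    · exact mem_fiber hx 1
    · exact zero_mem _⟩
  coord x := (fiber k (SuppCond n (a + 1) b x)).subtype
  vec_eq_zero x hx := Subtype.ext (if_neg fun h => hx ⟨h.1, h.2.1⟩)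
  coord_smul_vec x v := by
    refine Subtype.ext ((smul_eq_mul ..).trans ?_)
    change (v.1 : k) * (if SuppCond n (a + 1) b x then 1 else 0) = v.1
    split_ifs with hx
    · exact mul_one _
    · rw [fiber_eq_zero hx v, zero_mul]
  coord_vec x ha hx := if_pos ⟨ha, hx, by omega, by omega⟩
  arrow_vec i ha hi := by
    have hs : SuppCond n (a + 1) b i := ⟨by omega, by omega, by omega, by omega⟩
    have hs' : SuppCond n (a + 1) b (i + 1) := ⟨by omega, by omega, by omega, by omega⟩
    suffices ∀ β, ε i = β → ∀ v w, v.1 = 1 → w.1 = 1 →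
        (intervalRep k n ε (a + 1) b).arrow β i v = w from
      this _ rfl _ _ (if_pos (by rcases arrowSrc_arrowTgt (ε i) i with h | h <;> rwa [h.1]))
        (if_pos (by rcases arrowSrc_arrowTgt (ε i) i with h | h <;> rwa [h.2]))
    rintro (_ | _) hβ v w hv hw <;> refine Subtype.ext (Eq.trans ?_ hw.symm)
    · have harrow : (intervalRep k n ε (a + 1) b).arrow false i = fiberMap k _ _ :=
        if_neg (Bool.eq_false_iff.1 hβ)
      rw [harrow]
      exact (fiberMap_coe _ _ v).trans ((if_pos ⟨hs', hs⟩).trans hv)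
    · have harrow : (intervalRep k n ε (a + 1) b).arrow true i = fiberMap k _ _ := if_pos hβ
      rw [harrow]
      exact (fiberMap_coe _ _ v).trans ((if_pos ⟨hs, hs'⟩).trans hv)

/-! ### Indecomposable representations are intervals -/

theorem exists_functional_eq_one {V : Type*} [AddCommGroup V] [Module k V] {p : Submodule k V}
    {v : V} (hv : v ∉ p) : ∃ c : V →ₗ[k] k, c v = 1 ∧ ∀ w ∈ p, c w = 0 := by
  obtain ⟨f, hf, hfp⟩ := Submodule.exists_dual_map_eq_bot_of_notMem hv inferInstance
  refine ⟨(f v)⁻¹ • f, inv_mul_cancel₀ hf, fun w hw => ?_⟩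
  have hfw : f w = 0 := (Submodule.mem_bot k).1 (hfp.le (Submodule.mem_map_of_mem hw))
  simp [hfw]

theorem exists_comp_eq_of_comap_le_ker {V W : Type*} [AddCommGroup V] [Module k V]
    [AddCommGroup W] [Module k W] {f : V →ₗ[k] W} {L : Submodule k W} {c : V →ₗ[k] k}
    (hc : L.comap f ≤ LinearMap.ker c) :
    ∃ g : W →ₗ[k] k, g ∘ₗ f = c ∧ ∀ w ∈ L, g w = 0 := by
  have hker : c ∈ (LinearMap.ker (L.mkQ ∘ₗ f)).dualAnnihilator :=
    (Submodule.mem_dualAnnihilator c).2 fun v hv => hc (by simpa using hv)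
  rw [← LinearMap.range_dualMap_eq_dualAnnihilator_ker] at hker
  obtain ⟨g, rfl⟩ := hker
  exact ⟨g ∘ₗ L.mkQ, rfl, fun w hw => by
    rw [LinearMap.comp_apply, L.mkQ_apply, (Submodule.Quotient.mk_eq_zero L).2 hw, map_zero]⟩

theorem exists_mem_ker_of_map_not_lt {V W : Type*} [AddCommGroup V] [Module k V]
    [AddCommGroup W] [Module k W] {f : V →ₗ[k] W} {L U : Submodule k V} (hLU : L < U)
    (h : ¬L.map f < U.map f) : ∃ v ∈ U, v ∉ L ∧ f v = 0 := by
  obtain ⟨u, hu, huL⟩ := SetLike.exists_of_lt hLU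
  have hle : U.map f ≤ L.map f := by
    by_contra hle
    exact h (lt_of_le_not_ge (Submodule.map_mono hLU.le) hle)
  obtain ⟨w, hw, hwu⟩ := hle (Submodule.mem_map_of_mem hu)
  refine ⟨u - w, U.sub_mem hu (hLU.le hw), fun huw => huL ?_, by rw [map_sub, hwu, sub_self]⟩
  simpa using L.add_mem huw hw

theorem exists_notMem_sup_range_of_comap_not_lt {V W : Type*} [AddCommGroup V] [Module k V]
    [AddCommGroup W] [Module k W] {f : V →ₗ[k] W} {L U : Submodule k W} (hLU : L < U)
    (h : ¬L.comap f < U.comap f) : ∃ u ∈ U, u ∉ L ⊔ LinearMap.range f := by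
  obtain ⟨u, hu, huL⟩ := SetLike.exists_of_lt hLU
  have hle : U.comap f ≤ L.comap f := by
    by_contra hle
    exact h (lt_of_le_not_ge (Submodule.comap_mono hLU.le) hle)
  refine ⟨u, hu, fun hmem => ?_⟩
  obtain ⟨x, hx, _, ⟨w, rfl⟩, rfl⟩ := Submodule.mem_sup.1 hmem
  have hwU : f w ∈ U := (U.add_mem_iff_right (hLU.le hx)).1 hu
  exact huL (L.add_mem hx (hle hwU))

/-- A thread of `M` from `y` to `j`: dual families of vectors and functionals compatible with the
arrows to the right of `y`. It splits off an interval with support `y, …, j` from the part of `M`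
to the right of `y`. -/
structure Thread (M : ARep k n ε) (y j : ℕ) where
  vec : ∀ x, M.V x
  coord : ∀ x, M.V x →ₗ[k] k
  vec_eq_zero : ∀ x, j < x → vec x = 0
  coord_eq_zero : ∀ x, j < x → coord x = 0
  coord_vec : ∀ x, y ≤ x → x ≤ j → coord x (vec x) = 1
  arrow_vec : ∀ i, y ≤ i → arrowSrc (ε i) i ≤ j → M.arrow (ε i) i (vec _) = vec _
  coord_arrow : ∀ i, y ≤ i → arrowTgt (ε i) i ≤ j → coord _ ∘ₗ M.arrow (ε i) i = coord _

namespace Thread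

variable {M : ARep k n ε} {y j : ℕ}

/-- The thread with empty support. -/
def empty (M : ARep k n ε) (y : ℕ) : Thread M (y + 1) y where
  vec _ := 0
  coord _ := 0
  vec_eq_zero _ _ := rfl
  coord_eq_zero _ _ := rfl
  coord_vec x hx hx' := by omega
  arrow_vec _ _ _ := map_zero _
  coord_arrow _ _ _ := LinearMap.zero_comp _

/-- Prolong a thread by one vertex to the left. -/
def cons (t : Thread M (y + 1) j) (hy : y ≤ j) (v : M.V y) (c : M.V y →ₗ[k] k) (hcv : c v = 1)
    (hfwd : ε y = true → M.fwd y v = t.vec (y + 1) ∧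
      (y < j → t.coord (y + 1) ∘ₗ M.fwd y = c))
    (hbwd : ε y = false → c ∘ₗ M.bwd y = t.coord (y + 1) ∧
      (y < j → M.bwd y (t.vec (y + 1)) = v)) : Thread M y j where
  vec := Function.update t.vec y v
  coord := Function.update t.coord y c
  vec_eq_zero x hx := by rw [Function.update_of_ne (by omega), t.vec_eq_zero x hx]
  coord_eq_zero x hx := by rw [Function.update_of_ne (by omega), t.coord_eq_zero x hx]
  coord_vec x hx hxj := by
    rcases hx.eq_or_lt with rfl | hx
    · simpa using hcv
    · simpa [hx.ne'] using t.coord_vec x hx hxj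
  arrow_vec i hi hij := by
    rcases hi.eq_or_lt with rfl | hi
    · revert hij
      have hne : y + 1 ≠ y := by omega
      generalize hβ : ε y = β
      cases β
      · intro hij
        change M.bwd y (Function.update t.vec y v (y + 1)) = Function.update t.vec y v y
        rw [Function.update_of_ne hne, Function.update_self, (hbwd hβ).2 hij]
      · intro _
        change M.fwd y (Function.update t.vec y v y) = Function.update t.vec y v (y + 1)
        rw [Function.update_of_ne hne, Function.update_self, (hfwd hβ).1]
    · rw [Function.update_of_ne, Function.update_of_ne, t.arrow_vec i hi hij] <;>
        rcases arrowSrc_arrowTgt (ε i) i with h | h <;> omega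
  coord_arrow i hi hij := by
    rcases hi.eq_or_lt with rfl | hi
    · revert hij
      have hne : y + 1 ≠ y := by omega
      generalize hβ : ε y = β
      cases β
      · intro _
        change Function.update t.coord y c y ∘ₗ M.bwd y = Function.update t.coord y c (y + 1)
        rw [Function.update_of_ne hne, Function.update_self, (hbwd hβ).1]
      · intro hij
        change Function.update t.coord y c (y + 1) ∘ₗ M.fwd y = Function.update t.coord y c y
        rw [Function.update_of_ne hne, Function.update_self, (hfwd hβ).2 hij]
    · rw [Function.update_of_ne, Function.update_of_ne, t.coord_arrow i hi hij] <;>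
        rcases arrowSrc_arrowTgt (ε i) i with h | h <;> omega

theorem cons_vec (t : Thread M (y + 1) j) (hy v c hcv hfwd hbwd) :
    (t.cons hy v c hcv hfwd hbwd).vec y = v :=
  Function.update_self ..

theorem cons_coord (t : Thread M (y + 1) j) (hy v c hcv hfwd hbwd) :
    (t.cons hy v c hcv hfwd hbwd).coord y = c :=
  Function.update_self ..

/-- A thread from `y` separates `L` from `U` when its vector at `y` lies in `U` and its functional
at `y` vanishes on `L`. -/
def Separates (t : Thread M y j) (L U : Submodule k (M.V y)) : Prop :=
  t.vec y ∈ U ∧ ∀ w ∈ L, t.coord y w = 0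

theorem separates_cons (t : Thread M (y + 1) j) {L U : Submodule k (M.V y)}
    {v : M.V y} {c : M.V y →ₗ[k] k} (hv : v ∈ U) (hc : ∀ w ∈ L, c w = 0) (hy hcv hfwd hbwd) :
    (t.cons hy v c hcv hfwd hbwd).Separates L U :=
  ⟨by rwa [cons_vec], by rwa [cons_coord]⟩

end Thread

variable {M : ARep k n ε} {y : ℕ} {L U : Submodule k (M.V y)}

theorem exists_separating_thread_of_fwd (hε : ε y = true) (hLU : L < U)
    (ih : L.map (M.fwd y) < U.map (M.fwd y) → ∃ j, y + 1 ≤ j ∧ ∃ t : Thread M (y + 1) j,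
      t.Separates (L.map (M.fwd y)) (U.map (M.fwd y))) :
    ∃ j, y ≤ j ∧ ∃ t : Thread M y j, t.Separates L U := by
  by_cases hmap : L.map (M.fwd y) < U.map (M.fwd y)
  · obtain ⟨j, hj, t, ⟨v, hv, hvt⟩, ht⟩ := ih hmap
    exact ⟨j, by omega, _, t.separates_cons (c := t.coord (y + 1) ∘ₗ M.fwd y) hv
      (fun w hw => ht _ (Submodule.mem_map_of_mem hw)) (by omega)
      ((congrArg _ hvt).trans (t.coord_vec _ le_rfl hj)) (fun _ => ⟨hvt, fun _ => rfl⟩)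
      (by simp [hε])⟩
  · obtain ⟨v, hv, hvL, hv0⟩ := exists_mem_ker_of_map_not_lt hLU hmap
    obtain ⟨c, hcv, hc⟩ := exists_functional_eq_one hvL
    exact ⟨y, le_rfl, _, (Thread.empty M y).separates_cons hv hc le_rfl hcv
      (fun _ => ⟨hv0, by simp⟩) (by simp [hε])⟩

theorem exists_separating_thread_of_bwd (hε : ε y = false) (hLU : L < U)
    (ih : L.comap (M.bwd y) < U.comap (M.bwd y) → ∃ j, y + 1 ≤ j ∧ ∃ t : Thread M (y + 1) j,
      t.Separates (L.comap (M.bwd y)) (U.comap (M.bwd y))) :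
    ∃ j, y ≤ j ∧ ∃ t : Thread M y j, t.Separates L U := by
  by_cases hcomap : L.comap (M.bwd y) < U.comap (M.bwd y)
  · obtain ⟨j, hj, t, htU, htL⟩ := ih hcomap
    obtain ⟨c, hct, hc⟩ := exists_comp_eq_of_comap_le_ker htL
    exact ⟨j, by omega, _, t.separates_cons htU hc (by omega)
      ((LinearMap.congr_fun hct _).trans (t.coord_vec _ le_rfl hj)) (by simp [hε])
      fun _ => ⟨hct, fun _ => rfl⟩⟩
  · obtain ⟨u, hu, huL⟩ := exists_notMem_sup_range_of_comap_not_lt hLU hcomap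
    obtain ⟨c, hcu, hc⟩ := exists_functional_eq_one huL
    exact ⟨y, le_rfl, _, (Thread.empty M y).separates_cons hu
      (fun w hw => hc w (Submodule.mem_sup_left hw)) le_rfl hcu (by simp [hε])
      fun _ => ⟨LinearMap.ext fun w => hc _ (Submodule.mem_sup_right ⟨w, rfl⟩), by simp⟩⟩

theorem exists_separating_thread (M : ARep k n ε) {y : ℕ} {L U : Submodule k (M.V y)}
    (hLU : L < U) : ∃ j, y ≤ j ∧ ∃ t : Thread M y j, t.Separates L U := by
  rcases lt_or_ge (n + 2) y with hy | hy
  · obtain ⟨u, -, hu⟩ := SetLike.exists_of_lt hLU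
    exact absurd (M.triv y (.inr hy) u ▸ L.zero_mem) hu
  · cases hε : ε y
    · exact exists_separating_thread_of_bwd hε hLU (exists_separating_thread M)
    · exact exists_separating_thread_of_fwd hε hLU (exists_separating_thread M)
termination_by n + 3 - y

/-- The endomorphism projecting onto a thread that starts at the first nonzero vertex of `M`. -/
def Thread.proj {j : ℕ} (t : Thread M y j) (hy : ∀ x < y, ∀ v : M.V x, v = 0) : M.Hom M :=
  .ofArrows (fun x => (t.coord x).smulRight (t.vec x)) fun i v => by
    change t.coord _ (M.arrow (ε i) i v) • t.vec _ = M.arrow (ε i) i (t.coord _ v • t.vec _)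
    have hends := arrowSrc_arrowTgt (ε i) i
    rcases lt_or_ge i y with hi | hi
    · rcases hends with ⟨h, -⟩ | ⟨-, h⟩
      · rw [hy _ (h.trans_lt hi) v]; simp
      · exact (hy _ (h.trans_lt hi) _).trans (hy _ (h.trans_lt hi) _).symm
    rw [map_smul]
    by_cases htgt : arrowTgt (ε i) i ≤ j
    · rw [show t.coord _ (M.arrow (ε i) i v) = t.coord _ v from
        LinearMap.congr_fun (t.coord_arrow i hi htgt) v]
      by_cases hsrc : arrowSrc (ε i) i ≤ j
      · rw [t.arrow_vec i hi hsrc]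
      · simp [t.coord_eq_zero _ (not_le.1 hsrc)]
    · rw [t.vec_eq_zero _ (not_le.1 htgt), smul_zero]
      by_cases hsrc : arrowSrc (ε i) i ≤ j
      · rw [t.arrow_vec i hi hsrc, t.vec_eq_zero _ (not_le.1 htgt), smul_zero]
      · rw [t.coord_eq_zero _ (not_le.1 hsrc), LinearMap.zero_apply, zero_smul]

theorem Thread.coord_smul_vec {j : ℕ} (t : Thread M y j) (hyj : y ≤ j) (hM : M.Indec)
    (hy : ∀ x < y, ∀ v : M.V x, v = 0) (x : ℕ) (v : M.V x) : t.coord x v • t.vec x = v := by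
  have happ : ∀ x v, (t.proj hy).app x v = t.coord x v • t.vec x := fun _ _ => rfl
  refine (hM.eq_zero_or_eq_id_of_idempotent (p := t.proj hy) fun x v => ?_).resolve_left ?_ x v
  · rw [happ, happ, map_smul]
    rcases lt_or_ge x y with hx | hx
    · exact (hy x hx _).trans (hy x hx _).symm
    · rcases le_or_gt x j with hxj | hxj
      · rw [t.coord_vec x hx hxj, smul_eq_mul, mul_one]
      · rw [t.vec_eq_zero x hxj, smul_zero, smul_zero]
  · intro h0
    have hone := t.coord_vec y le_rfl hyj
    have hvec : t.vec y = 0 := by simpa [happ, hone] using h0 y (t.vec y)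
    simp [hvec] at hone

/-- The basis of an indecomposable representation given by a thread from its first nonzero
vertex. -/
def Thread.intervalBasis {j : ℕ} (t : Thread M y j) (hyj : y ≤ j) (hM : M.Indec)
    (hy : ∀ x < y, ∀ v : M.V x, v = 0) (hy0 : 0 < y) : IntervalBasis M (y - 1) j where
  vec := t.vec
  coord := t.coord
  vec_eq_zero x hx := by
    rcases lt_or_ge x y with hxy | hxy
    · exact hy x hxy _
    · exact t.vec_eq_zero x (by omega)
  coord_smul_vec := t.coord_smul_vec hyj hM hy
  coord_vec x hx := t.coord_vec x (by omega)
  arrow_vec i hi hij := t.arrow_vec i (by omega) (by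
    have := arrowSrc_arrowTgt (ε i) i
    omega)

theorem ARep.Indec.exists_intervalBasis (hM : M.Indec) :
    ∃ a b, a < b ∧ b ≤ n + 2 ∧ Nonempty (IntervalBasis M a b) := by
  have hex : ∃ x, ∃ v : M.V x, v ≠ 0 := by simpa [ARep.IsZero] using hM.1
  obtain ⟨y, ⟨v, hv⟩, hmin⟩ :
      ∃ y, (∃ v : M.V y, v ≠ 0) ∧ ∀ x < y, ∀ v : M.V x, v = 0 :=
    ⟨Nat.find hex, Nat.find_spec hex, fun x hx v => by
      by_contra hv; exact Nat.find_min hex hx ⟨v, hv⟩⟩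
  have hy0 : 0 < y := Nat.pos_of_ne_zero fun h => hv (M.triv y (.inl h) v)
  have hlt : (⊥ : Submodule k (M.V y)) < ⊤ :=
    SetLike.lt_iff_le_and_exists.2 ⟨bot_le, v, Submodule.mem_top, by simpa using hv⟩
  obtain ⟨j, hyj, t, -⟩ := exists_separating_thread M hlt
  refine ⟨y - 1, j, by omega, ?_, ⟨t.intervalBasis hyj hM hmin hy0⟩⟩
  by_contra hj
  have hvec : t.vec j = 0 := M.triv j (.inr (not_le.1 hj)) _
  simpa [hvec] using t.coord_vec j hyj le_rfl

/-! ### Summands of direct sums of intervals -/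

namespace ARep.Indec

variable {A M : ARep k n ε}

theorem exists_app_eq_smul (hM : M.Indec) (f : M.Hom M) : ∃ c : k, ∀ x v, f.app x v = c • v := by
  obtain ⟨a, b, -, -, ⟨h⟩⟩ := hM.exists_intervalBasis
  exact h.exists_app_eq_smul f

theorem iso_of_endpoints_eq (hA : A.Indec) (hM : M.Indec) (h : A.endpoints = M.endpoints) :
    A.Iso M := by
  obtain ⟨a, b, hab, -, ⟨hA⟩⟩ := hA.exists_intervalBasis
  obtain ⟨c, d, hcd, -, ⟨hM⟩⟩ := hM.exists_intervalBasis
  rw [hA.endpoints_eq hab, hM.endpoints_eq hcd, Prod.mk.injEq] at h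
  obtain ⟨rfl, rfl⟩ := h
  exact hA.iso hM

theorem smul_eq_zero_iff (hM : M.Indec) {c : k} : (∀ x (v : M.V x), c • v = 0) ↔ c = 0 := by
  refine ⟨fun h => ?_, fun h x v => by rw [h, zero_smul]⟩
  by_contra hc
  exact hM.1 fun x v => (smul_eq_zero_iff_right hc).1 (h x v)

theorem app_app_eq_zero_of_endpoints_ne (hA : A.Indec) (hM : M.Indec)
    (h : A.endpoints ≠ M.endpoints) (q : A.Hom M) (p : M.Hom A) (x : ℕ) (v : A.V x) :
    p.app x (q.app x v) = 0 := by
  obtain ⟨c, hc⟩ := hA.exists_app_eq_smul (p.comp q)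
  suffices c = 0 from (hc x v).trans (by rw [this, zero_smul])
  by_contra hc0
  have hsummand : A.IsSummand M := isSummand_iff_exists_retraction.2
    ⟨q, p.smul c⁻¹, fun x v => (congrArg (c⁻¹ • ·) (hc x v)).trans (inv_smul_smul₀ hc0 v)⟩
  exact h (hM.iso_of_isSummand hA.1 hsummand).endpoints_eq.symm

theorem exists_app_app_eq_mul_smul (hA : A.Indec) (hM : M.Indec) :
    ∃ (lam : M.Hom A → k) (μ : A.Hom M → k),
      ∀ p q x v, p.app x (q.app x v) = (lam p * μ q) • v := by
  by_cases h : A.endpoints = M.endpoints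
  · obtain ⟨f, hf⟩ := hA.iso_of_endpoints_eq hM h
    choose lam hlam using fun p : M.Hom A => hA.exists_app_eq_smul (p.comp f)
    choose μ hμ using fun q : A.Hom M => hA.exists_app_eq_smul ((f.inv hf).comp q)
    refine ⟨lam, μ, fun p q x v => ?_⟩
    rw [mul_smul, ← hμ, ← hlam]
    exact congrArg (p.app x) (f.app_inv_app hf x _).symm
  · exact ⟨0, 0, fun p q x v => by
      simp [hA.app_app_eq_zero_of_endpoints_ne hM h q p x v]⟩

end ARep.Indec

theorem ARep.Hom.app_app_dsum {A B C D : ARep k n ε} (q : A.Hom (B.dsum C))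
    (p : (B.dsum C).Hom D) (x : ℕ) (v : A.V x) :
    p.app x (q.app x v) =
      (p.comp (.inl B C)).app x (((ARep.Hom.fst B C).comp q).app x v) +
        (p.comp (.inr B C)).app x (((ARep.Hom.snd B C).comp q).app x v) := by
  refine Eq.trans (congrArg (p.app x) ?_) (map_add (p.app x) _ _)
  exact Prod.ext (add_zero _).symm (zero_add _).symm

variable {A : ARep k n ε} {L : List (ARep k n ε)}

theorem app_app_dsumList_eq_zero (hA : A.Indec) (hL : ∀ M ∈ L, M.Indec)
    (h : A.endpoints ∉ L.map ARep.endpoints) (q : A.Hom (dsumList k n ε L))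
    (p : (dsumList k n ε L).Hom A) (x : ℕ) (v : A.V x) : p.app x (q.app x v) = 0 := by
  induction L with
  | nil =>
    have hq : q.app x v = 0 := Subtype.ext (fiber_eq_zero id _)
    rw [hq, map_zero]
  | cons M L ih =>
    rw [List.map_cons, List.mem_cons, not_or] at h
    rw [List.forall_mem_cons] at hL
    refine (ARep.Hom.app_app_dsum q p x v).trans ?_
    rw [hA.app_app_eq_zero_of_endpoints_ne hL.1 h.1, zero_add]
    exact ih hL.2 h.2 _ _

theorem exists_app_app_dsumList_eq_mul_smul (hA : A.Indec) (hL : ∀ M ∈ L, M.Indec)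
    (hnodup : (L.map ARep.endpoints).Nodup) :
    ∃ (lam : (dsumList k n ε L).Hom A → k) (μ : A.Hom (dsumList k n ε L) → k),
      ∀ p q x v, p.app x (q.app x v) = (lam p * μ q) • v := by
  induction L with
  | nil => exact ⟨0, 0, fun p q x v => by simp [app_app_dsumList_eq_zero hA hL (by simp) q p x v]⟩
  | cons M L ih =>
    rw [List.map_cons, List.nodup_cons] at hnodup
    rw [List.forall_mem_cons] at hL
    by_cases h : A.endpoints = M.endpoints
    · obtain ⟨lam, μ, hcomp⟩ := hA.exists_app_app_eq_mul_smul hL.1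
      refine ⟨fun p => lam (p.comp (.inl M _)), fun q => μ ((ARep.Hom.fst M _).comp q),
        fun p q x v => ?_⟩
      refine (ARep.Hom.app_app_dsum q p x v).trans ?_
      rw [hcomp, app_app_dsumList_eq_zero hA hL.2 (h ▸ hnodup.1), add_zero]
      rfl
    · obtain ⟨lam, μ, hcomp⟩ := ih hL.2 hnodup.2
      refine ⟨fun p => lam (p.comp (.inr M _)), fun q => μ ((ARep.Hom.snd M _).comp q),
        fun p q x v => ?_⟩
      refine (ARep.Hom.app_app_dsum q p x v).trans ?_
      rw [hcomp, hA.app_app_eq_zero_of_endpoints_ne hL.1 h, zero_add]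
      rfl

theorem endpoints_mem_of_isSummand_dsumList (hA : A.Indec) (hL : ∀ M ∈ L, M.Indec)
    (h : A.IsSummand (dsumList k n ε L)) : A.endpoints ∈ L.map ARep.endpoints := by
  by_contra hmem
  obtain ⟨q, p, hpq⟩ := ARep.isSummand_iff_exists_retraction.1 h
  exact hA.1 fun x v => (hpq x v).symm.trans (app_app_dsumList_eq_zero hA hL hmem q p x v)

theorem basic_dsumList_iff_nodup_endpoints (hL : ∀ M ∈ L, M.Indec) :
    (dsumList k n ε L).Basic ↔ (L.map ARep.endpoints).Nodup := by
  constructor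
  · intro hbasic
    rw [List.Nodup, List.pairwise_map, List.pairwise_iff_forall_sublist]
    intro M N hsub heq
    have hM : M.Indec := hL M (hsub.subset (by simp))
    have hN : N.Indec := hL N (hsub.subset (by simp))
    have hMN : M.IsSummand (dsumList k n ε [N]) :=
      (hM.iso_of_endpoints_eq hN heq).isSummand.trans (isSummand_dsumList_of_mem (by simp))
    exact hbasic M hM
      ((ARep.IsSummand.dsum (.refl M) hMN).trans (isSummand_dsumList_of_sublist hsub))
  · intro hnodup A hA hAA
    obtain ⟨q, p, hpq⟩ := ARep.isSummand_iff_exists_retraction.1 hAA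
    obtain ⟨lam, μ, hcomp⟩ := exists_app_app_dsumList_eq_mul_smul hA hL hnodup
    let p₁ := (ARep.Hom.fst A A).comp p
    let p₂ := (ARep.Hom.snd A A).comp p
    let q₁ := q.comp (.inl A A)
    let q₂ := q.comp (.inr A A)
    have h₁₁ : lam p₁ * μ q₁ - 1 = 0 := hA.smul_eq_zero_iff.1 fun x v => by
      rw [sub_smul, one_smul, ← hcomp, sub_eq_zero]
      exact congrArg Prod.fst (hpq x ((ARep.Hom.inl A A).app x v))
    have h₂₂ : lam p₂ * μ q₂ - 1 = 0 := hA.smul_eq_zero_iff.1 fun x v => by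
      rw [sub_smul, one_smul, ← hcomp, sub_eq_zero]
      exact congrArg Prod.snd (hpq x ((ARep.Hom.inr A A).app x v))
    have h₁₂ : lam p₁ * μ q₂ = 0 := hA.smul_eq_zero_iff.1 fun x v => by
      rw [← hcomp]
      exact congrArg Prod.fst (hpq x ((ARep.Hom.inr A A).app x v))
    rcases mul_eq_zero.1 h₁₂ with h | h
    · simp [h] at h₁₁
    · simp [h] at h₂₂

/-! ### Extensions and cocycles -/

/-- A 1-cochain of `Q` with values in `Hom(A, B)`, which twists the direct sum `B ⊕ A` into an
extension of `A` by `B`. Only the components `φ (ε i) i` matter. -/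
abbrev Cocycle (A B : ARep k n ε) : Type :=
  ∀ β i, A.V (arrowSrc β i) →ₗ[k] B.V (arrowTgt β i)

/-- The extension of `A` by `B` attached to `φ` splits exactly when `φ` is a coboundary, the
coboundary of a family of linear maps measuring its failure to be a morphism. -/
def Cocycle.IsCoboundary {A B : ARep k n ε} (φ : Cocycle A B) : Prop :=
  ∃ t : ∀ x, A.V x →ₗ[k] B.V x, ∀ i v,
    φ (ε i) i v = B.arrow (ε i) i (t _ v) - t _ (A.arrow (ε i) i v)

/-- The middle term of the extension of `A` by `B` attached to a cocycle. -/
def twist {A B : ARep k n ε} (φ : Cocycle A B) : ARep k n ε :=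
  .ofArrows (fun x => B.V x × A.V x)
    (fun x hx v => Prod.ext (B.triv x hx v.1) (A.triv x hx v.2))
    fun β i => ((B.arrow β i).coprod (φ β i)).prod ((A.arrow β i).comp (.snd k _ _))

/-- The extensions `σ` and `τ` are related by an isomorphism inducing the identity on `B` and `c`
on `A`; for `c ≠ 0` this makes their classes in `Ext¹(A, B)` proportional. -/
def SES.ScaledEquiv {A B : ARep k n ε} (c : k) (σ τ : SES B A) : Prop :=
  ∃ φ : σ.E.Hom τ.E, (∀ x, Function.Bijective (φ.app x)) ∧
    (∀ x v, φ.app x (σ.ι.app x v) = τ.ι.app x v) ∧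
    ∀ x v, τ.π.app x (φ.app x v) = c • σ.π.app x v

section

variable {A B : ARep k n ε}

theorem twist_arrow (φ : Cocycle A B) (i : ℕ) (v : B.V (arrowSrc (ε i) i) × A.V _) :
    (twist φ).arrow (ε i) i v =
      (B.arrow (ε i) i v.1 + φ (ε i) i v.2, A.arrow (ε i) i v.2) :=
  LinearMap.congr_fun (f := (twist φ).arrow (ε i) i) (ARep.ofArrows_arrow i) v

/-- The extension of `A` by `B` attached to a cocycle. -/
def twistSES (φ : Cocycle A B) : SES B A where
  E := twist φ
  ι := .ofArrows (fun x => .inl k (B.V x) (A.V x)) fun i v => by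
    refine Eq.trans ?_ (twist_arrow φ i (v, 0)).symm
    refine Prod.ext (Eq.trans ?_ (congrArg (_ + ·) (map_zero (φ (ε i) i)).symm)) (map_zero _).symm
    exact (add_zero _).symm
  π := .ofArrows (fun x => .snd k (B.V x) (A.V x)) fun i v => congrArg Prod.snd (twist_arrow φ i v)
  inj _ := LinearMap.inl_injective
  surj _ := LinearMap.snd_surjective
  exct _ v := ⟨fun h => ⟨v.1, Prod.ext rfl h.symm⟩, by rintro ⟨u, rfl⟩; rfl⟩

theorem twistSES_splits_iff {φ : Cocycle A B} : (twistSES φ).Splits ↔ φ.IsCoboundary := by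
  constructor
  · rintro ⟨r, hr⟩
    refine ⟨fun x => (r.app x).comp (.inr k (B.V x) (A.V x)), fun i v => ?_⟩
    have hadd x (u : B.V x) (w : A.V x) : r.app x (u, w) = u + r.app x (0, w) := by
      calc r.app x (u, w) = r.app x ((u, 0) + (0, w) : B.V x × A.V x) :=
            congrArg (r.app x) (Prod.ext (add_zero u) (zero_add w)).symm
        _ = r.app x (u, (0 : A.V x)) + r.app x ((0 : B.V x), w) := map_add (r.app x) _ _
        _ = u + r.app x (0, w) := congrArg (· + _) (hr x u)
    have hcomm := (congrArg (r.app _) (twist_arrow φ i (0, v))).symm.trans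
      (r.comm_arrow (ε i) i ((0 : B.V (arrowSrc (ε i) i)), v))
    rw [map_zero, zero_add, hadd] at hcomm
    exact eq_sub_of_add_eq hcomm
  · rintro ⟨t, ht⟩
    refine ⟨.ofArrows (fun x => (LinearMap.id : B.V x →ₗ[k] B.V x).coprod (t x)) fun i v => ?_,
      fun x v => ?_⟩
    · refine (congrArg (LinearMap.coprod .id (t _)) (twist_arrow φ i v)).trans ?_
      change B.arrow (ε i) i v.1 + φ (ε i) i v.2 + t _ (A.arrow (ε i) i v.2) =
        B.arrow (ε i) i (v.1 + t _ v.2)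
      rw [ht, map_add, add_assoc, sub_add_cancel]
    · change v + t x 0 = v
      rw [map_zero, add_zero]

theorem SES.ScaledEquiv.splits {c : k} {σ τ : SES B A} (h : σ.ScaledEquiv c τ) (hσ : σ.Splits) :
    τ.Splits := by
  obtain ⟨φ, hφ, hι, -⟩ := h
  obtain ⟨r, hr⟩ := hσ
  refine ⟨r.comp (φ.inv hφ), fun x v => ?_⟩
  rw [← hι]
  exact (congrArg (r.app x) (φ.inv_app_app hφ x _)).trans (hr x v)

theorem SES.ScaledEquiv.trans {c c' : k} {σ τ υ : SES B A} (h : σ.ScaledEquiv c τ)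
    (h' : τ.ScaledEquiv c' υ) : σ.ScaledEquiv (c' * c) υ := by
  obtain ⟨φ, hφ, hι, hπ⟩ := h
  obtain ⟨φ', hφ', hι', hπ'⟩ := h'
  refine ⟨φ'.comp φ, fun x => (hφ' x).comp (hφ x), fun x v => ?_, fun x v => ?_⟩
  · exact (congrArg (φ'.app x) (hι x v)).trans (hι' x v)
  · exact (hπ' x _).trans ((congrArg (c' • ·) (hπ x v)).trans (smul_smul ..))

theorem scaledEquiv_twistSES_of_eq_smul {φ ψ : Cocycle A B} {s : k} (hs : s ≠ 0)
    (h : ∀ i, ψ (ε i) i = s • φ (ε i) i) : (twistSES φ).ScaledEquiv s⁻¹ (twistSES ψ) := by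
  let θ x : B.V x × A.V x →ₗ[k] B.V x × A.V x := .prodMap .id (s⁻¹ • .id)
  refine ⟨.ofArrows θ fun i v => ?_, fun x => ⟨?_, ?_⟩, fun x v => ?_, fun x v => rfl⟩
  · refine (congrArg (θ _) (twist_arrow φ i v)).trans
      (Eq.trans ?_ (twist_arrow ψ i (θ _ v)).symm)
    change (B.arrow (ε i) i v.1 + φ (ε i) i v.2, s⁻¹ • A.arrow (ε i) i v.2) =
      (B.arrow (ε i) i v.1 + ψ (ε i) i (s⁻¹ • v.2), A.arrow (ε i) i (s⁻¹ • v.2))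
    rw [h, LinearMap.smul_apply, map_smul, map_smul, smul_inv_smul₀ hs]
  · exact fun u v (huv : θ x u = θ x v) => Prod.ext (congrArg Prod.fst huv :)
      (smul_right_injective _ (inv_ne_zero hs) (congrArg Prod.snd huv :))
  · exact fun v => ⟨(v.1, s • v.2), Prod.ext rfl (inv_smul_smul₀ hs _)⟩
  · exact Prod.ext rfl (smul_zero _)

theorem exists_scaledEquiv_twistSES (τ : SES B A) :
    ∃ φ : Cocycle A B, (twistSES φ).ScaledEquiv 1 τ := by
  choose s hs using fun x => (τ.π.app x).exists_rightInverse_of_surjective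
    (LinearMap.range_eq_top.2 (τ.surj x))
  choose r hr using fun x => (τ.ι.app x).exists_leftInverse_of_injective
    (LinearMap.ker_eq_bot.2 (τ.inj x))
  replace hs x v : τ.π.app x (s x v) = v := LinearMap.congr_fun (hs x) v
  have hπι x v : τ.π.app x (τ.ι.app x v) = 0 := (τ.exct x _).2 ⟨v, rfl⟩
  have hιr x v (hv : τ.π.app x v = 0) : τ.ι.app x (r x v) = v := by
    obtain ⟨u, rfl⟩ := (τ.exct x v).1 hv
    exact congrArg (τ.ι.app x) (LinearMap.congr_fun (hr x) u)
  let φ : Cocycle A B := fun β i =>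
    (r _).comp ((τ.E.arrow β i).comp (s _) - (s _).comp (A.arrow β i))
  let θ x : B.V x × A.V x →ₗ[k] τ.E.V x := (τ.ι.app x).coprod (s x)
  have hπθ x v : τ.π.app x (θ x v) = v.2 := by
    change τ.π.app x (τ.ι.app x v.1 + s x v.2) = v.2
    rw [map_add, hπι, hs, zero_add]
  refine ⟨φ, .ofArrows θ fun i v => ?_, fun x => ⟨?_, fun z => ?_⟩, fun x v => ?_, fun x v => ?_⟩
  · refine (congrArg (θ _) (twist_arrow φ i v)).trans ?_
    change τ.ι.app _ (B.arrow (ε i) i v.1 +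
        r _ (τ.E.arrow (ε i) i (s _ v.2) - s _ (A.arrow (ε i) i v.2))) +
      s _ (A.arrow (ε i) i v.2) = τ.E.arrow (ε i) i (τ.ι.app _ v.1 + s _ v.2)
    rw [map_add, hιr, τ.ι.comm_arrow, map_add, add_assoc, sub_add_cancel]
    rw [map_sub, τ.π.comm_arrow, hs, hs, sub_self]
  · refine (injective_iff_map_eq_zero (θ x)).2 fun v hv => ?_
    have hv₂ : v.2 = 0 := by rw [← hπθ, hv, map_zero]
    have hv₁ : τ.ι.app x v.1 + s x v.2 = 0 := hv
    rw [hv₂, map_zero, add_zero] at hv₁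
    exact Prod.ext (τ.inj x (hv₁.trans (map_zero _).symm)) hv₂
  · refine ⟨(r x (z - s x (τ.π.app x z)), τ.π.app x z), ?_⟩
    change τ.ι.app x (r x (z - s x (τ.π.app x z))) + s x (τ.π.app x z) = z
    rw [hιr, sub_add_cancel]
    rw [map_sub, hs, sub_self]
  · change τ.ι.app x v + s x 0 = τ.ι.app x v
    rw [map_zero, add_zero]
  · exact (hπθ x v).trans (one_smul k _).symm

theorem extZero_of_forall_isCoboundary (h : ∀ φ : Cocycle A B, φ.IsCoboundary) :
    ExtZero A B := fun τ => by
  obtain ⟨φ, hφ⟩ := exists_scaledEquiv_twistSES τ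
  exact hφ.splits (twistSES_splits_iff.2 (h φ))

theorem extOneDimIndecMid_of_forall_eq_smul {φ : Cocycle A B} (hφ : ¬φ.IsCoboundary)
    (hindec : (twist φ).Indec) (h : ∀ ψ : Cocycle A B, ∃ s : k, ∀ i, ψ (ε i) i = s • φ (ε i) i) :
    ExtOneDimIndecMid A B := by
  refine ⟨twistSES φ, mt twistSES_splits_iff.1 hφ, hindec, fun τ hτ => ?_⟩
  obtain ⟨ψ, hψ⟩ := exists_scaledEquiv_twistSES τ
  obtain ⟨s, hs⟩ := h ψ
  have hs0 : s ≠ 0 := by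
    rintro rfl
    exact hτ (hψ.splits (twistSES_splits_iff.2 ⟨0, fun i v => by simp [hs]⟩))
  exact ⟨1 * s⁻¹, by simpa using hs0, (scaledEquiv_twistSES_of_eq_smul hs0 hs).trans hψ⟩

end

/-! ### Extensions between intervals -/

/-- The arrow between `i` and `i + 1` starts in the support of the interval attached to `e` and
ends in that of the interval attached to `f`. -/
def Connects (ε : ℕ → Bool) (e f : ℕ × ℕ) (i : ℕ) : Prop :=
  (e.1 < arrowSrc (ε i) i ∧ arrowSrc (ε i) i ≤ e.2) ∧
    f.1 < arrowTgt (ε i) i ∧ arrowTgt (ε i) i ≤ f.2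

/-- The supports attached to `e` and `f` meet, and the arrows at both ends of their intersection
lead from `e` to `f`. This is the crossing of the segments `γ(e)` and `γ(f)` for which
`Ext¹` of the `e`-interval by the `f`-interval is nonzero. -/
def Obstructed (ε : ℕ → Bool) (e f : ℕ × ℕ) : Prop :=
  max e.1 f.1 < min e.2 f.2 ∧ Connects ε e f (max e.1 f.1) ∧ Connects ε e f (min e.2 f.2)

theorem connects_iff {a b c d i : ℕ} : Connects ε (a, b) (c, d) i ↔
    ε i = true ∧ a < i ∧ i ≤ b ∧ c ≤ i ∧ i < d ∨ ε i = false ∧ a ≤ i ∧ i < b ∧ c < i ∧ i ≤ d := by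
  cases h : ε i <;> simp only [Connects, arrowSrc, arrowTgt, h, cond_true, cond_false,
    reduceCtorEq, true_and, false_and, false_or, or_false] <;> omega

theorem Connects.bounds {e f : ℕ × ℕ} {i : ℕ} (h : Connects ε e f i) :
    max e.1 f.1 ≤ i ∧ i ≤ min e.2 f.2 := by
  have := connects_iff.1 h
  omega

theorem Connects.of_mem_Icc {e f : ℕ × ℕ} {i : ℕ} (hl : Connects ε e f (max e.1 f.1))
    (hm : Connects ε e f (min e.2 f.2)) (hi : max e.1 f.1 ≤ i ∧ i ≤ min e.2 f.2) :
    Connects ε e f i := by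
  rcases hi.1.eq_or_lt with rfl | hli
  · exact hl
  rcases hi.2.eq_or_lt with rfl | him
  · exact hm
  rw [connects_iff]
  cases h : ε i <;> simp only [reduceCtorEq, true_and, false_and, false_or, or_false] <;> omega

theorem exists_primitive {G : Type*} [AddCommGroup G] {l m : ℕ} {P : ℕ → Prop}
    (hP : ∀ i, P i → l ≤ i ∧ i ≤ m) (hfree : ¬P l ∨ ¬P m) (q : ℕ → G) :
    ∃ t : ℕ → G, (∀ x, ¬(l < x ∧ x ≤ m) → t x = 0) ∧ ∀ i, P i → t (i + 1) - t i = q i := by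
  let s x := ∑ i ∈ Finset.range x, if P i then q i else 0
  have hs i (hi : P i) : s (i + 1) - s i = q i := by
    simp only [s, Finset.sum_range_succ, if_pos hi, add_sub_cancel_left]
  have hsl : s l = 0 := Finset.sum_eq_zero fun i hi => if_neg fun hPi => by
    have := hP i hPi
    have := Finset.mem_range.1 hi
    omega
  obtain ⟨C, hCl, hCm⟩ : ∃ C, (P l → C = s l) ∧ (P m → C = s (m + 1)) := by
    rcases hfree with h | h
    · exact ⟨s (m + 1), fun hl => absurd hl h, fun _ => rfl⟩
    · exact ⟨s l, fun _ => rfl, fun hm => absurd hm h⟩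
  refine ⟨fun x => if l < x ∧ x ≤ m then s x - C else 0, fun x hx => if_neg hx, fun i hi => ?_⟩
  have hlow : (if l < i ∧ i ≤ m then s i - C else 0) = s i - C := by
    split_ifs with h
    · rfl
    · obtain rfl : i = l := by have := hP i hi; omega
      rw [hCl hi, sub_self]
  have hhigh : (if l < i + 1 ∧ i + 1 ≤ m then s (i + 1) - C else 0) = s (i + 1) - C := by
    split_ifs with h
    · rfl
    · obtain rfl : i = m := by have := hP i hi; omega
      rw [hCm hi, sub_self]
  simp only [hlow, hhigh, sub_sub_sub_cancel_right, hs i hi]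

namespace IntervalBasis

variable {M A B : ARep k n ε} {a b c d : ℕ}

theorem arrow_vec_of_imp (h : IntervalBasis M a b) {i : ℕ}
    (hi : a < arrowTgt (ε i) i → arrowTgt (ε i) i ≤ b →
      a < arrowSrc (ε i) i ∧ arrowSrc (ε i) i ≤ b) :
    M.arrow (ε i) i (h.vec _) = h.vec _ := by
  by_cases htgt : a < arrowTgt (ε i) i ∧ arrowTgt (ε i) i ≤ b
  · have := hi htgt.1 htgt.2
    have := arrowSrc_arrowTgt (ε i) i
    exact h.arrow_vec i (by omega) (by omega)
  · exact (h.eq_zero htgt _).trans (h.eq_zero htgt _).symm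

theorem coord_arrow (h : IntervalBasis M a b) {i : ℕ}
    (htgt : a < arrowTgt (ε i) i ∧ arrowTgt (ε i) i ≤ b) (v : M.V (arrowSrc (ε i) i)) :
    h.coord _ (M.arrow (ε i) i v) = h.coord _ v := by
  by_cases hsrc : a < arrowSrc (ε i) i ∧ arrowSrc (ε i) i ≤ b
  · conv_lhs => rw [← h.coord_smul_vec _ v]
    rw [map_smul, map_smul, h.arrow_vec_of_imp fun _ _ => hsrc, h.coord_vec _ htgt.1 htgt.2,
      smul_eq_mul, mul_one]
  · rw [h.eq_zero hsrc v, map_zero, map_zero, map_zero]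

/-- The matrix entry of a linear map between fibers of two intervals. -/
def entry (hA : IntervalBasis A a b) (hB : IntervalBasis B c d) {x y : ℕ}
    (F : A.V x →ₗ[k] B.V y) : k :=
  hB.coord y (F (hA.vec x))

/-- The linear map between fibers of two intervals with a given matrix entry. -/
def ofEntry (hA : IntervalBasis A a b) (hB : IntervalBasis B c d) (x y : ℕ) (s : k) :
    A.V x →ₗ[k] B.V y :=
  s • (hA.coord x).smulRight (hB.vec y)

theorem ofEntry_entry (hA : IntervalBasis A a b) (hB : IntervalBasis B c d) {x y : ℕ}
    (F : A.V x →ₗ[k] B.V y) : hA.ofEntry hB x y (hA.entry hB F) = F := LinearMap.ext fun v => by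
  rw [ofEntry, LinearMap.smul_apply, LinearMap.smulRight_apply, smul_comm, entry,
    hB.coord_smul_vec, ← map_smul, hA.coord_smul_vec]

theorem entry_ofEntry (hA : IntervalBasis A a b) (hB : IntervalBasis B c d) {x y : ℕ}
    (hx : a < x ∧ x ≤ b) (hy : c < y ∧ y ≤ d) (s : k) : hA.entry hB (hA.ofEntry hB x y s) = s := by
  rw [entry, ofEntry, LinearMap.smul_apply, LinearMap.smulRight_apply, hA.coord_vec x hx.1 hx.2,
    one_smul, map_smul, hB.coord_vec y hy.1 hy.2, smul_eq_mul, mul_one]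

theorem entry_eq_zero (hA : IntervalBasis A a b) (hB : IntervalBasis B c d) {x y : ℕ}
    (h : ¬((a < x ∧ x ≤ b) ∧ c < y ∧ y ≤ d)) (F : A.V x →ₗ[k] B.V y) : hA.entry hB F = 0 := by
  rcases not_and_or.1 h with hx | hy
  · rw [entry, hA.eq_zero hx (hA.vec x), map_zero, map_zero]
  · rw [entry, hB.eq_zero hy (F _), map_zero]

theorem map_ext (hA : IntervalBasis A a b) (hB : IntervalBasis B c d) {x y : ℕ}
    {F G : A.V x →ₗ[k] B.V y}
    (h : (a < x ∧ x ≤ b) ∧ c < y ∧ y ≤ d → hA.entry hB F = hA.entry hB G) : F = G := by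
  rw [← hA.ofEntry_entry hB F, ← hA.ofEntry_entry hB G]
  congr 1
  by_cases hxy : (a < x ∧ x ≤ b) ∧ c < y ∧ y ≤ d
  · exact h hxy
  · rw [hA.entry_eq_zero hB hxy, hA.entry_eq_zero hB hxy]

theorem entry_coboundary (hA : IntervalBasis A a b) (hB : IntervalBasis B c d)
    (T : ∀ x, A.V x →ₗ[k] B.V x) {i : ℕ} (hi : Connects ε (a, b) (c, d) i) :
    hA.entry hB ((B.arrow (ε i) i).comp (T _) - (T _).comp (A.arrow (ε i) i)) =
      hA.entry hB (T (arrowSrc (ε i) i)) - hA.entry hB (T (arrowTgt (ε i) i)) := by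
  simp only [entry, LinearMap.sub_apply, LinearMap.comp_apply, map_sub]
  rw [hB.coord_arrow hi.2, hA.arrow_vec_of_imp fun _ _ => hi.1]

theorem isCoboundary_iff (hA : IntervalBasis A a b) (hB : IntervalBasis B c d)
    {φ : Cocycle A B} : φ.IsCoboundary ↔
      ∃ t : ℕ → k, (∀ x, ¬(max a c < x ∧ x ≤ min b d) → t x = 0) ∧
        ∀ i, Connects ε (a, b) (c, d) i →
          hA.entry hB (φ (ε i) i) = t (arrowSrc (ε i) i) - t (arrowTgt (ε i) i) := by
  constructor
  · rintro ⟨T, hT⟩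
    refine ⟨fun x => hA.entry hB (T x), fun x hx => hA.entry_eq_zero hB (by omega) _,
      fun i hi => ?_⟩
    rw [← hA.entry_coboundary hB T hi]
    exact congrArg (hA.entry hB) (LinearMap.ext (hT i))
  · rintro ⟨t, ht0, ht⟩
    let T x := hA.ofEntry hB x x (t x)
    have hT x : hA.entry hB (T x) = t x := by
      by_cases hx : max a c < x ∧ x ≤ min b d
      · exact hA.entry_ofEntry hB (by omega) (by omega) _
      · rw [ht0 x hx, hA.entry_eq_zero hB (by omega)]
    refine ⟨T, fun i => ?_⟩
    have hφ : φ (ε i) i = (B.arrow (ε i) i).comp (T _) - (T _).comp (A.arrow (ε i) i) :=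
      hA.map_ext hB fun hi => (ht i hi).trans (by rw [hA.entry_coboundary hB T hi, hT, hT])
    exact LinearMap.congr_fun hφ

/-- The cocycle with entry `1` at the arrow between `j` and `j + 1` and `0` elsewhere. -/
def elementary (hA : IntervalBasis A a b) (hB : IntervalBasis B c d) (j : ℕ) : Cocycle A B :=
  fun _ i => hA.ofEntry hB _ _ (if i = j then 1 else 0)

theorem entry_elementary (hA : IntervalBasis A a b) (hB : IntervalBasis B c d) (j : ℕ) {i : ℕ}
    (hi : Connects ε (a, b) (c, d) i) :
    hA.entry hB (hA.elementary hB j (ε i) i) = if i = j then 1 else 0 :=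
  hA.entry_ofEntry hB hi.1 hi.2 _

theorem extZero_of_not_connects (hA : IntervalBasis A a b) (hB : IntervalBasis B c d)
    (h : ¬Connects ε (a, b) (c, d) (max a c) ∨ ¬Connects ε (a, b) (c, d) (min b d)) :
    ExtZero A B := by
  refine extZero_of_forall_isCoboundary fun φ => (hA.isCoboundary_iff hB).2 ?_
  obtain ⟨t, ht0, ht⟩ := exists_primitive (fun i hi => Connects.bounds hi) h
    fun i => if ε i = true then -hA.entry hB (φ (ε i) i) else hA.entry hB (φ (ε i) i)
  refine ⟨t, ht0, fun i hi => ?_⟩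
  have hprim := ht i hi
  split_ifs at hprim with hε <;> simp only [arrowSrc, arrowTgt, hε, cond_true, cond_false] at *
  · rw [← neg_sub, hprim, neg_neg]
  · exact hprim.symm

-- A potential vanishing off the overlap is constant up to the last arrow, hence zero there.
theorem not_isCoboundary_elementary (hA : IntervalBasis A a b) (hB : IntervalBasis B c d)
    (hl : Connects ε (a, b) (c, d) (max a c)) (hm : Connects ε (a, b) (c, d) (min b d)) :
    ¬(hA.elementary hB (min b d)).IsCoboundary := fun h => by
  obtain ⟨t, ht0, ht⟩ := (hA.isCoboundary_iff hB).1 h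
  have hlm : max a c ≤ min b d := hm.bounds.1
  have hconst x (hx : max a c ≤ x) : x ≤ min b d → t x = 0 := by
    induction x, hx using Nat.le_induction with
    | base => exact fun _ => ht0 _ (by omega)
    | succ x hx ih =>
      intro hxm
      have hpot := ht x (hl.of_mem_Icc hm ⟨hx, by dsimp only; omega⟩)
      rw [entry_elementary _ _ _ (hl.of_mem_Icc hm ⟨hx, by dsimp only; omega⟩),
        if_neg (by omega)] at hpot
      have hx0 := ih (by omega)
      rcases arrowSrc_arrowTgt (ε x) x with ⟨hs, ht⟩ | ⟨hs, ht⟩ <;> rw [hs, ht, hx0] at hpot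
      · simpa using hpot.symm
      · simpa using hpot.symm
  have hend := ht _ hm
  have hlast := hconst _ hlm le_rfl
  have hnext : t (min b d + 1) = 0 := ht0 _ (by omega)
  rw [entry_elementary _ _ _ hm, if_pos rfl] at hend
  rcases arrowSrc_arrowTgt (ε (min b d)) (min b d) with ⟨hs, ht⟩ | ⟨hs, ht⟩ <;>
    rw [hs, ht, hlast, hnext, sub_zero] at hend <;> exact one_ne_zero hend

theorem not_extOneDimIndecMid_of_overlap (hA : IntervalBasis A a b) (hB : IntervalBasis B c d)
    (h : max a c < min b d) : ¬ExtOneDimIndecMid A B := by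
  rintro ⟨σ, -, hE, -⟩
  obtain ⟨p, q, -, -, ⟨hσ⟩⟩ := hE.exists_intervalBasis
  set x := min b d
  have hA0 : hA.vec x ≠ 0 := hA.vec_ne_zero (by omega) (by omega)
  have hB0 : hB.vec x ≠ 0 := hB.vec_ne_zero (by omega) (by omega)
  obtain ⟨w, hw⟩ := σ.surj x (hA.vec x)
  have hπι : σ.π.app x (σ.ι.app x (hB.vec x)) = 0 := (σ.exct x _).2 ⟨_, rfl⟩
  rw [← hσ.coord_smul_vec x (σ.ι.app x (hB.vec x)), map_smul, smul_eq_zero] at hπι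
  rcases hπι with hι | hπ
  · refine hB0 (σ.inj x ?_)
    rw [← hσ.coord_smul_vec x (σ.ι.app x (hB.vec x)), hι, zero_smul, map_zero]
  · refine hA0 ?_
    rw [← hw, ← hσ.coord_smul_vec x w, map_smul, hπ, smul_zero]

/-- The middle term of a nonsplit extension of adjacent intervals is their union. -/
def twistBasis (hA : IntervalBasis A a b) (hB : IntervalBasis B c d)
    (hlm : max a c = min b d) (hm : Connects ε (a, b) (c, d) (min b d)) :
    IntervalBasis (twist (hA.elementary hB (min b d))) (min a c) (max b d) where
  vec x := (hB.vec x, hA.vec x)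
  coord x := (hB.coord x).coprod (hA.coord x)
  vec_eq_zero x hx := Prod.ext (hB.vec_eq_zero x (by omega)) (hA.vec_eq_zero x (by omega))
  coord_smul_vec x v := by
    have hdisj : ¬(a < x ∧ x ≤ b) ∨ ¬(c < x ∧ x ≤ d) := by omega
    change (hB.coord x v.1 + hA.coord x v.2) • (hB.vec x, hA.vec x) = (v.1, v.2)
    rcases hdisj with hx | hx
    · rw [hA.eq_zero hx v.2, map_zero, add_zero, Prod.smul_mk, hB.coord_smul_vec,
        hA.eq_zero hx (hA.vec x), smul_zero]
    · rw [hB.eq_zero hx v.1, map_zero, zero_add, Prod.smul_mk, hA.coord_smul_vec,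
        hB.eq_zero hx (hB.vec x), smul_zero]
  coord_vec x hx hx' := by
    have hcover : (¬(a < x ∧ x ≤ b) ∧ c < x ∧ x ≤ d) ∨ (a < x ∧ x ≤ b) ∧ ¬(c < x ∧ x ≤ d) := by
      have := connects_iff.1 hm
      omega
    change hB.coord x (hB.vec x) + hA.coord x (hA.vec x) = 1
    rcases hcover with ⟨hxA, hxB⟩ | ⟨hxA, hxB⟩
    · rw [hA.eq_zero hxA (hA.vec x), map_zero, add_zero, hB.coord_vec x hxB.1 hxB.2]
    · rw [hB.eq_zero hxB (hB.vec x), map_zero, zero_add, hA.coord_vec x hxA.1 hxA.2]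
  arrow_vec i hi hi' := by
    refine (twist_arrow _ i (hB.vec _, hA.vec _)).trans ?_
    have hconn := connects_iff.1 hm
    have hends := arrowSrc_arrowTgt (ε i) i
    rcases eq_or_ne i (min b d) with rfl | hij
    · have hsrc : ¬(c < arrowSrc (ε (min b d)) (min b d) ∧
          arrowSrc (ε (min b d)) (min b d) ≤ d) := by
        rcases hconn with h | h <;> simp only [arrowSrc, h.1, cond_true, cond_false] <;> omega
      have htgt : ¬(a < arrowTgt (ε (min b d)) (min b d) ∧
          arrowTgt (ε (min b d)) (min b d) ≤ b) := by
        rcases hconn with h | h <;> simp only [arrowTgt, h.1, cond_true, cond_false] <;> omega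
      refine Prod.ext ?_ (hA.arrow_vec_of_imp fun h h' => absurd ⟨h, h'⟩ htgt)
      dsimp only [elementary]
      rw [hB.eq_zero hsrc (hB.vec _), map_zero, zero_add, if_pos rfl, ofEntry, one_smul,
        LinearMap.smulRight_apply, hA.coord_vec _ hm.1.1 hm.1.2, one_smul]
    · dsimp only [elementary]
      rw [if_neg hij, ofEntry, zero_smul, LinearMap.zero_apply, add_zero,
        hB.arrow_vec_of_imp (by omega), hA.arrow_vec_of_imp (by omega)]

theorem extOneDimIndecMid_of_adjacent (hA : IntervalBasis A a b) (hB : IntervalBasis B c d)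
    (hlm : max a c = min b d) (hm : Connects ε (a, b) (c, d) (min b d)) :
    ExtOneDimIndecMid A B := by
  have hlt : min a c < max b d := by
    have := connects_iff.1 hm
    omega
  refine extOneDimIndecMid_of_forall_eq_smul (hA.not_isCoboundary_elementary hB (hlm ▸ hm) hm)
    ((hA.twistBasis hB hlm hm).indec hlt) fun ψ =>
      ⟨hA.entry hB (ψ (ε (min b d)) (min b d)), fun i => hA.map_ext hB fun hi => ?_⟩
  obtain rfl : i = min b d := by
    have : max a c ≤ i ∧ i ≤ min b d := Connects.bounds (e := (a, b)) (f := (c, d)) hi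
    omega
  have hone := hA.entry_elementary hB (min b d) hm
  rw [if_pos rfl, entry] at hone
  rw [entry, entry, LinearMap.smul_apply, map_smul, hone, smul_eq_mul, mul_one]

theorem extZero_or_extOneDimIndecMid_iff (hA : IntervalBasis A a b) (hB : IntervalBasis B c d) :
    ExtZero A B ∨ ExtOneDimIndecMid A B ↔ ¬Obstructed ε (a, b) (c, d) := by
  constructor
  · rintro (h | h) ⟨hlt, hl, hm⟩
    · exact hA.not_isCoboundary_elementary hB hl hm (twistSES_splits_iff.1 (h _))
    · exact hA.not_extOneDimIndecMid_of_overlap hB hlt h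
  · intro h
    by_cases hl : Connects ε (a, b) (c, d) (max a c)
    · by_cases hm : Connects ε (a, b) (c, d) (min b d)
      · have hlm : max a c ≤ min b d := hm.bounds.1
        have hnot : ¬max a c < min b d := fun hlt => h ⟨hlt, hl, hm⟩
        exact .inr (hA.extOneDimIndecMid_of_adjacent hB (by omega) hm)
      · exact .inl (hA.extZero_of_not_connects hB (.inr hm))
    · exact .inl (hA.extZero_of_not_connects hB (.inl hl))

end IntervalBasis

/-! ### Counting chords -/

/-- The chords `e` and `f` of a polygon, given by increasing pairs of vertices, cross, with `e`
starting first. -/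
def Interleave {α : Type*} [LinearOrder α] (e f : α × α) : Prop :=
  e.1 < f.1 ∧ f.1 < e.2 ∧ e.2 < f.2

/-- `S` is a triangulation of the convex polygon with vertex set `V`, that is, a maximal set of
pairwise noncrossing chords; the edges of the polygon count as chords. -/
structure IsPolygonTriangulation {α : Type*} [LinearOrder α] (V : Finset α)
    (S : Finset (α × α)) : Prop where
  mem_vertices : ∀ e ∈ S, e.1 ∈ V ∧ e.2 ∈ V ∧ e.1 < e.2
  not_interleave : ∀ e ∈ S, ∀ f ∈ S, ¬Interleave e f
  mem_of_not_interleave : ∀ p ∈ V, ∀ q ∈ V, p < q →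
    (∀ f ∈ S, ¬Interleave (p, q) f ∧ ¬Interleave f (p, q)) → (p, q) ∈ S

theorem card_filter_add_card_filter {α : Type*} [LinearOrder α] {V : Finset α} {p q r : α}
    (hr : r ∈ V) (hpr : p ≤ r) (hrq : r ≤ q) :
    (V.filter fun v => p ≤ v ∧ v ≤ r).card + (V.filter fun v => r ≤ v ∧ v ≤ q).card =
      (V.filter fun v => p ≤ v ∧ v ≤ q).card + 1 := by
  have hunion : (V.filter fun v => p ≤ v ∧ v ≤ r) ∪ (V.filter fun v => r ≤ v ∧ v ≤ q) =
      V.filter fun v => p ≤ v ∧ v ≤ q := by grind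
  have hinter : (V.filter fun v => p ≤ v ∧ v ≤ r) ∩ (V.filter fun v => r ≤ v ∧ v ≤ q) = {r} := by
    grind
  rw [← Finset.card_union_add_card_inter, hunion, hinter, Finset.card_singleton]

namespace IsPolygonTriangulation

variable {α : Type*} [LinearOrder α] {V : Finset α} {S : Finset (α × α)} {p q r : α}

theorem exists_apex (h : IsPolygonTriangulation V S) (hpq : (p, q) ∈ S)
    (hV : ∃ v ∈ V, p < v ∧ v < q) : ∃ r, (p, r) ∈ S ∧ (r, q) ∈ S := by
  obtain ⟨hp, hq, -⟩ := h.mem_vertices _ hpq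
  have hnonempty : (V.filter fun v => p < v ∧ v < q ∧ (p, v) ∈ S).Nonempty := by
    obtain ⟨v, hv, hmin⟩ := (V.filter fun v => p < v ∧ v < q).exists_minimal
      (by simpa [Finset.Nonempty] using hV)
    obtain ⟨hvV, hpv, hvq⟩ := Finset.mem_filter.1 hv
    refine ⟨v, Finset.mem_filter.2 ⟨hvV, hpv, hvq,
      h.mem_of_not_interleave p hp v hvV hpv fun f hf => ?_⟩⟩
    obtain ⟨hf1, hf2, -⟩ := h.mem_vertices f hf
    have hnext w (hw : w ∈ V) (hpw : p < w) (hwv : w < v) : False :=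
      (hmin (Finset.mem_filter.2 ⟨hw, hpw, hwv.trans hvq⟩) hwv.le).not_gt hwv
    exact ⟨fun hcross => hnext _ hf1 hcross.1 hcross.2.1,
      fun hcross => hnext _ hf2 hcross.2.1 hcross.2.2⟩
  obtain ⟨r, hr, hmax⟩ := Finset.exists_maximal hnonempty
  obtain ⟨hrV, hpr, hrq, hprS⟩ := Finset.mem_filter.1 hr
  refine ⟨r, hprS, h.mem_of_not_interleave r hrV q hq hrq fun f hf => ?_⟩
  obtain ⟨-, hf2, -⟩ := h.mem_vertices f hf
  have hlongest : f.1 = p → f.2 < q → f.2 ≤ r := by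
    rintro rfl hfq
    by_contra! hrf
    exact (hmax (Finset.mem_filter.2 ⟨hf2, hpr.trans hrf, hfq, hf⟩) hrf.le).not_gt hrf
  have := h.not_interleave _ hpq f hf
  have := h.not_interleave f hf _ hpq
  have := h.not_interleave _ hprS f hf
  grind [Interleave]

theorem filter_eq_insert_union (h : IsPolygonTriangulation V S) (hpq : (p, q) ∈ S)
    (hpr : (p, r) ∈ S) (hrq : (r, q) ∈ S) :
    (S.filter fun f => p ≤ f.1 ∧ f.2 ≤ q) =
      insert (p, q) ((S.filter fun f => p ≤ f.1 ∧ f.2 ≤ r) ∪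
        S.filter fun f => r ≤ f.1 ∧ f.2 ≤ q) := by
  obtain ⟨-, -, hpr'⟩ := h.mem_vertices _ hpr
  obtain ⟨-, -, hrq'⟩ := h.mem_vertices _ hrq
  ext f
  have hleft := h.not_interleave _ hpr f
  have hright := fun hf => h.not_interleave f hf _ hrq
  grind [Interleave]

theorem card_filter_eq_add (h : IsPolygonTriangulation V S) (hpq : (p, q) ∈ S)
    (hpr : (p, r) ∈ S) (hrq : (r, q) ∈ S) :
    (S.filter fun f => p ≤ f.1 ∧ f.2 ≤ q).card =
      (S.filter fun f => p ≤ f.1 ∧ f.2 ≤ r).card +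
        (S.filter fun f => r ≤ f.1 ∧ f.2 ≤ q).card + 1 := by
  obtain ⟨-, -, hpr'⟩ := h.mem_vertices _ hpr
  obtain ⟨-, -, hrq'⟩ := h.mem_vertices _ hrq
  rw [h.filter_eq_insert_union hpq hpr hrq, Finset.card_insert_of_notMem (by grind),
    Finset.card_union_of_disjoint]
  refine Finset.disjoint_left.2 fun f hfl hfr => ?_
  have := h.mem_vertices f
  grind

theorem card_filter_add_three (h : IsPolygonTriangulation V S) (hpq : (p, q) ∈ S) :
    (S.filter fun f => p ≤ f.1 ∧ f.2 ≤ q).card + 3 =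
      2 * (V.filter fun v => p ≤ v ∧ v ≤ q).card := by
  induction hm : (V.filter fun v => p ≤ v ∧ v ≤ q).card using Nat.strong_induction_on
    generalizing p q with
  | _ m ih
  obtain ⟨hp, hq, hlt⟩ := h.mem_vertices _ hpq
  by_cases hV : ∃ v ∈ V, p < v ∧ v < q
  · obtain ⟨r, hpr, hrq⟩ := h.exists_apex hpq hV
    obtain ⟨-, hr : r ∈ V, hpr' : p < r⟩ := h.mem_vertices _ hpr
    obtain ⟨-, -, hrq' : r < q⟩ := h.mem_vertices _ hrq
    have hsplit := card_filter_add_card_filter hr hpr'.le hrq'.le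
    have hpr2 : 1 < (V.filter fun v => p ≤ v ∧ v ≤ r).card :=
      Finset.one_lt_card.2 ⟨p, by grind, r, by grind, hpr'.ne⟩
    have hrq2 : 1 < (V.filter fun v => r ≤ v ∧ v ≤ q).card :=
      Finset.one_lt_card.2 ⟨r, by grind, q, by grind, hrq'.ne⟩
    have hleft := ih _ (by omega) hpr rfl
    have hright := ih _ (by omega) hrq rfl
    have := h.card_filter_eq_add hpq hpr hrq
    omega
  · have hVpq : (V.filter fun v => p ≤ v ∧ v ≤ q) = {p, q} := by
      ext v
      have := lt_trichotomy v p
      have := lt_trichotomy v q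
      grind
    have hSpq : (S.filter fun f => p ≤ f.1 ∧ f.2 ≤ q) = {(p, q)} := by
      ext f
      have := h.mem_vertices f
      have := lt_trichotomy f.1 p
      have := lt_trichotomy f.2 q
      grind
    rw [← hm, hVpq, hSpq, Finset.card_singleton, Finset.card_pair hlt.ne]

theorem card_add_three (h : IsPolygonTriangulation V S) (hV : 1 < V.card) :
    S.card + 3 = 2 * V.card := by
  have hne : V.Nonempty := Finset.card_pos.1 (by omega)
  have hmem : (V.min' hne, V.max' hne) ∈ S := by
    refine h.mem_of_not_interleave _ (V.min'_mem hne) _ (V.max'_mem hne)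
      (V.min'_lt_max'_of_card hV) fun f hf => ?_
    obtain ⟨hf1, hf2, -⟩ := h.mem_vertices f hf
    exact ⟨fun hcross => (V.le_max' _ hf2).not_gt hcross.2.2,
      fun hcross => (V.min'_le _ hf1).not_gt hcross.1⟩
  have hcard := h.card_filter_add_three hmem
  rwa [Finset.filter_true_of_mem fun f hf => ⟨V.min'_le _ (h.mem_vertices f hf).1,
      V.le_max' _ (h.mem_vertices f hf).2.1⟩,
    Finset.filter_true_of_mem fun v hv => ⟨V.min'_le _ hv, V.le_max' _ hv⟩] at hcard

end IsPolygonTriangulation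

/-! ### Crossing segments of the polygon -/

/-- The position of the vertex `x` of the polygon in the cyclic order starting at `0`: the lower
vertices come first, in increasing order, then the upper ones, in decreasing order. -/
def pos (n : ℕ) (ε : ℕ → Bool) (x : ℕ) : ℕ :=
  if x = 0 ∨ x = n + 2 ∨ ε x = false then x else 2 * (n + 2) - x

/-- The segment `γ(e)` as a chord between positions in the cyclic order. -/
def chord (n : ℕ) (ε : ℕ → Bool) (e : ℕ × ℕ) : ℕ × ℕ :=
  (min (pos n ε e.1) (pos n ε e.2), max (pos n ε e.1) (pos n ε e.2))

theorem pos_eq_or (x : ℕ) : pos n ε x = x ∨ pos n ε x = 2 * (n + 2) - x ∧ x ≠ 0 := by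
  grind [pos]

theorem pos_eq_ite {x : ℕ} (hx : x ≠ 0) (hxn : x < n + 2) :
    pos n ε x = if ε x = true then 2 * (n + 2) - x else x := by
  grind [pos]

theorem obstructed_or_iff_of_lt {a b c d : ℕ} (hac : a < c) (hcd : c < d) :
    Obstructed ε (a, b) (c, d) ∨ Obstructed ε (c, d) (a, b) ↔
      c < b ∧ (b < d ∧ ε b = ε c ∨ d < b ∧ ε d ≠ ε c) := by
  simp only [Obstructed, connects_iff, max_eq_right hac.le, max_eq_left hac.le]
  rcases lt_trichotomy b d with hbd | rfl | hbd
  · simp only [min_eq_left hbd.le, min_eq_right hbd.le, hbd.not_gt, false_and, or_false]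
    cases ε b <;> cases ε c <;>
      simp only [reduceCtorEq, true_and, false_and, and_true, and_false, or_false, false_or,
        iff_false] <;>
      omega
  · simp only [min_self, lt_self_iff_false, false_and, or_self, and_false]
  · simp only [min_eq_left hbd.le, min_eq_right hbd.le, hbd.not_gt, false_and, false_or]
    cases ε d <;> cases ε c <;>
      simp only [ne_eq, reduceCtorEq, not_true, not_false_iff, true_and, false_and, and_true,
        and_false, or_false, false_or, iff_false] <;>
      omega

theorem interleave_or_iff_of_lt {a b c d : ℕ} (hac : a < c) (hab : a < b) (hcd : c < d)
    (hb : b ≤ n + 2) (hd : d ≤ n + 2) :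
    Interleave (chord n ε (a, b)) (chord n ε (c, d)) ∨
        Interleave (chord n ε (c, d)) (chord n ε (a, b)) ↔
      c < b ∧ (b < d ∧ ε b = ε c ∨ d < b ∧ ε d ≠ ε c) := by
  simp only [Interleave, chord, pos_eq_ite (show c ≠ 0 by omega) (show c < n + 2 by omega)]
  have ha := pos_eq_or (n := n) (ε := ε) a
  rcases lt_trichotomy b d with hbd | rfl | hbd
  · simp only [hbd, hbd.not_gt, true_and, false_and, or_false,
      pos_eq_ite (show b ≠ 0 by omega) (show b < n + 2 by omega)]
    have hd := pos_eq_or (n := n) (ε := ε) d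
    cases ε b <;> cases ε c <;>
      simp only [reduceCtorEq, reduceIte, and_true, and_false, iff_false] <;> omega
  · simp only [lt_self_iff_false, false_and, or_self, and_false, iff_false]
    omega
  · simp only [hbd, hbd.not_gt, true_and, false_and, false_or,
      pos_eq_ite (show d ≠ 0 by omega) (show d < n + 2 by omega)]
    have hb := pos_eq_or (n := n) (ε := ε) b
    cases ε d <;> cases ε c <;>
      simp only [ne_eq, reduceCtorEq, reduceIte, not_true, not_false_iff, and_true, and_false,
        iff_false] <;>
      omega

theorem obstructed_or_iff_interleave {e f : ℕ × ℕ} (he : ValidPair n e) (hf : ValidPair n f) :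
    Obstructed ε e f ∨ Obstructed ε f e ↔
      Interleave (chord n ε e) (chord n ε f) ∨ Interleave (chord n ε f) (chord n ε e) := by
  obtain ⟨a, b⟩ := e
  obtain ⟨c, d⟩ := f
  obtain ⟨hab : a < b, hb : b ≤ n + 2⟩ := he
  obtain ⟨hcd : c < d, hd : d ≤ n + 2⟩ := hf
  rcases lt_trichotomy a c with hac | rfl | hca
  · rw [obstructed_or_iff_of_lt hac hcd, interleave_or_iff_of_lt hac hab hcd hb hd]
  · simp only [Obstructed, connects_iff, Interleave, chord]
    omega
  · rw [or_comm, or_comm (a := Interleave _ _), obstructed_or_iff_of_lt hca hab,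
      interleave_or_iff_of_lt hca hcd hab hd hb]

theorem pos_injOn : Set.InjOn (pos n ε) (Set.Iic (n + 2)) := by
  intro x hx y hy h
  rw [Set.mem_Iic] at hx hy
  grind [pos]

theorem chord_injOn : Set.InjOn (chord n ε) {e | ValidPair n e} := by
  rintro ⟨a, b⟩ ⟨hab : a < b, hb : b ≤ n + 2⟩ ⟨c, d⟩ ⟨hcd : c < d, hd : d ≤ n + 2⟩ h
  have hpos : pos n ε a = pos n ε c ∧ pos n ε b = pos n ε d ∨
      pos n ε a = pos n ε d ∧ pos n ε b = pos n ε c := by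
    simp only [chord, Prod.mk.injEq] at h
    omega
  have hinj : ∀ x ≤ n + 2, ∀ y ≤ n + 2, pos n ε x = pos n ε y → x = y :=
    fun x hx y hy => @pos_injOn n ε x hx y hy
  grind

theorem chord_min_max {x y : ℕ} (h : pos n ε x < pos n ε y) :
    chord n ε (min x y, max x y) = (pos n ε x, pos n ε y) := by
  rcases le_total x y with hxy | hyx
  · simp only [chord, min_eq_left hxy, max_eq_right hxy, min_eq_left h.le, max_eq_right h.le]
  · simp only [chord, min_eq_right hyx, max_eq_left hyx, min_eq_right h.le, max_eq_left h.le]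

theorem isPolygonTriangulation_image_chord {S : Finset (ℕ × ℕ)} (hS : ∀ e ∈ S, ValidPair n e)
    (hunobstructed : ∀ e ∈ S, ∀ f ∈ S, ¬Obstructed ε e f)
    (hmax : ∀ e, ValidPair n e → (∀ f ∈ S, ¬Obstructed ε e f ∧ ¬Obstructed ε f e) → e ∈ S) :
    IsPolygonTriangulation ((Finset.range (n + 3)).image (pos n ε)) (S.image (chord n ε)) where
  mem_vertices := by
    rw [Finset.forall_mem_image]
    intro e he
    obtain ⟨hlt, hle⟩ := hS e he
    have hmem x (hx : x ≤ n + 2) : pos n ε x ∈ (Finset.range (n + 3)).image (pos n ε) :=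
      Finset.mem_image_of_mem _ (Finset.mem_range.2 (by omega))
    have hne : pos n ε e.1 ≠ pos n ε e.2 := fun h => hlt.ne (pos_injOn (hlt.le.trans hle) hle h)
    refine ⟨?_, ?_, min_lt_max.2 hne⟩
    · exact min_rec' (· ∈ _) (hmem _ (hlt.le.trans hle)) (hmem _ hle)
    · exact max_rec' (· ∈ _) (hmem _ (hlt.le.trans hle)) (hmem _ hle)
  not_interleave := by
    simp only [Finset.forall_mem_image]
    intro e he f hf hcross
    exact ((obstructed_or_iff_interleave (hS e he) (hS f hf)).2 (.inl hcross)).elim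
      (hunobstructed e he f hf) (hunobstructed f hf e he)
  mem_of_not_interleave := by
    simp only [Finset.forall_mem_image, Finset.mem_range]
    intro x hx y hy hlt hcross
    have hne : x ≠ y := fun h => hlt.ne (congrArg _ h)
    have hvalid : ValidPair n (min x y, max x y) := ⟨min_lt_max.2 hne, by dsimp only; omega⟩
    rw [← chord_min_max hlt] at hcross ⊢
    refine Finset.mem_image_of_mem _ (hmax _ hvalid fun f hf => not_or.1 fun hobstructed => ?_)
    exact ((obstructed_or_iff_interleave hvalid (hS f hf)).1 hobstructed).elim
      (hcross hf).1 (hcross hf).2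

theorem card_eq_of_maximal_unobstructed {S : Finset (ℕ × ℕ)} (hS : ∀ e ∈ S, ValidPair n e)
    (hunobstructed : ∀ e ∈ S, ∀ f ∈ S, ¬Obstructed ε e f)
    (hmax : ∀ e, ValidPair n e → (∀ f ∈ S, ¬Obstructed ε e f ∧ ¬Obstructed ε f e) → e ∈ S) :
    S.card = 2 * n + 3 := by
  have hV : ((Finset.range (n + 3)).image (pos n ε)).card = n + 3 := by
    rw [Finset.card_image_of_injOn, Finset.card_range]
    exact pos_injOn.mono fun x hx => Nat.lt_succ_iff.1 (Finset.mem_range.1 hx)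
  have hcard := (isPolygonTriangulation_image_chord hS hunobstructed hmax).card_add_three
    (by omega)
  rw [Finset.card_image_of_injOn (chord_injOn.mono hS), hV] at hcard
  omega

/-! ### Maximal almost rigid representations -/

theorem ARep.Indec.validPair_endpoints {A : ARep k n ε} (hA : A.Indec) :
    ValidPair n A.endpoints := by
  obtain ⟨a, b, hab, hb, ⟨h⟩⟩ := hA.exists_intervalBasis
  rw [h.endpoints_eq hab]
  exact ⟨hab, hb⟩

theorem ARep.Indec.extZero_or_extOneDimIndecMid_iff {A B : ARep k n ε} (hA : A.Indec)
    (hB : B.Indec) :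
    ExtZero A B ∨ ExtOneDimIndecMid A B ↔ ¬Obstructed ε A.endpoints B.endpoints := by
  obtain ⟨a, b, hab, -, ⟨hA⟩⟩ := hA.exists_intervalBasis
  obtain ⟨c, d, hcd, -, ⟨hB⟩⟩ := hB.exists_intervalBasis
  rw [hA.endpoints_eq hab, hB.endpoints_eq hcd]
  exact hA.extZero_or_extOneDimIndecMid_iff hB

theorem not_obstructed_self (e : ℕ × ℕ) : ¬Obstructed ε e e := by
  rw [Obstructed, connects_iff]
  omega

theorem AlmostRigid.of_isSummand {S T : ARep k n ε} (hT : AlmostRigid T) (h : S.IsSummand T) :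
    AlmostRigid S :=
  ⟨fun A hA hAA => hT.1 A hA (hAA.trans h),
    fun A B hA hB hAS hBS => hT.2 A B hA hB (hAS.trans h) (hBS.trans h)⟩

theorem almostRigid_dsumList_iff {L : List (ARep k n ε)} (hL : ∀ M ∈ L, M.Indec) :
    AlmostRigid (dsumList k n ε L) ↔ (L.map ARep.endpoints).Nodup ∧
      ∀ e ∈ L.map ARep.endpoints, ∀ f ∈ L.map ARep.endpoints, ¬Obstructed ε e f := by
  rw [AlmostRigid, basic_dsumList_iff_nodup_endpoints hL]
  refine and_congr_right fun _ => ⟨fun hext => ?_, fun hcross A B hA hB hAL hBL => ?_⟩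
  · simp only [List.forall_mem_map]
    exact fun A hA B hB => ((hL A hA).extZero_or_extOneDimIndecMid_iff (hL B hB)).1
      (hext A B (hL A hA) (hL B hB) (isSummand_dsumList_of_mem hA) (isSummand_dsumList_of_mem hB))
  · exact (hA.extZero_or_extOneDimIndecMid_iff hB).2 <|
      hcross _ (endpoints_mem_of_isSummand_dsumList hA hL hAL) _
        (endpoints_mem_of_isSummand_dsumList hB hL hBL)

theorem MaxAlmostRigid.mem_map_endpoints {T : ARep k n ε} (hT : MaxAlmostRigid T)
    {L : List (ARep k n ε)} (hL : ∀ M ∈ L, M.Indec) (hTL : T.Iso (dsumList k n ε L)) {e : ℕ × ℕ}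
    (he : ValidPair n e)
    (hcross : ∀ f ∈ L.map ARep.endpoints, ¬Obstructed ε e f ∧ ¬Obstructed ε f e) :
    e ∈ L.map ARep.endpoints := by
  by_contra hmem
  obtain ⟨a, b⟩ := e
  obtain ⟨hab : a < b, hb : b ≤ n + 2⟩ := he
  have hM := intervalRepBasis (k := k) (ε := ε) (a := a) hb
  set M := intervalRep k n ε (a + 1) b
  have hrigid := (almostRigid_dsumList_iff hL).1 (hT.1.of_isSummand hTL.symm.isSummand)
  have hML : AlmostRigid (dsumList k n ε (M :: L)) := by
    refine (almostRigid_dsumList_iff (List.forall_mem_cons.2 ⟨hM.indec hab, hL⟩)).2 ?_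
    simp only [List.map_cons, hM.endpoints_eq hab, List.nodup_cons, List.forall_mem_cons]
    exact ⟨⟨hmem, hrigid.1⟩, ⟨not_obstructed_self _, fun f hf => (hcross f hf).1⟩,
      fun f hf => ⟨(hcross f hf).2, hrigid.2 f hf⟩⟩
  exact hT.2 M (hM.not_isZero hab) <| hML.of_isSummand <|
    (ARep.IsSummand.swap T M).trans (.dsum (.refl M) hTL.isSummand)

end CambrianA

namespace CambrianA

/-- every maximal almost rigid representation of `Q` has exactly `2n+3`
pairwise non-isomorphic indecomposable direct summands. -/
theorem stmt_10 (k : Type) [Field k] (n : ℕ) (ε : ℕ → Bool) (T : ARep k n ε)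
    (hT : MaxAlmostRigid T) :
    ∀ L : List (ARep k n ε), (∀ M ∈ L, M.Indec) → T.Iso (dsumList k n ε L) →
      L.length = 2 * n + 3 ∧ L.Pairwise fun A B => ¬A.Iso B := by
  intro L hL hTL
  obtain ⟨hnodup, hunobstructed⟩ :=
    (almostRigid_dsumList_iff hL).1 (hT.1.of_isSummand hTL.symm.isSummand)
  constructor
  · rw [← List.length_map (as := L) ARep.endpoints, ← List.toFinset_card_of_nodup hnodup]
    apply card_eq_of_maximal_unobstructed (ε := ε) <;> simp only [List.mem_toFinset]
    · exact List.forall_mem_map.2 fun M hM => (hL M hM).validPair_endpoints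
    · exact hunobstructed
    · exact fun e he => hT.mem_map_endpoints hL hTL he
  · exact (List.pairwise_map.1 hnodup).imp fun hne hiso => hne hiso.endpoints_eq

end CambrianA
end
end

section
/- For any finite list of intervals (i₁,j₁), …, (i_m,j_m) with 1 ≤ i_s ≤ j_s ≤ n+2, there is an isomorphism of k-algebras End_{rep Q}(⊕_{s=1}^m M(i_s, j_s)) ≅ End_{rep Q̄}(⊕_{s=1}^m M̄(i_s, j_s)). -/
open scoped Classical

noncomputable section

namespace CambrianA

/-- The orientation of the subdivided quiver `Q̄` of type `A_{2n+3}` : the vertex `v` of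
`Q̄` (a half-integer `1, 3/2, …, n+2`) corrresponds to the index `2v−1 ∈ {1, …, 2n+3}`,
and both halves of the original arrow `i ↔ i+1` inherit its orientation. -/
def barε (ε : ℕ → Bool) : ℕ → Bool := fun a => ε ((a + 1) / 2)

/-- The direct sum `⊕ₛ M(iₛ, jₛ)` of interval representations of `Q`. -/
def TQ (k : Type) [Field k] (n : ℕ) (ε : ℕ → Bool) (L : List (ℕ × ℕ)) : ARep k n ε :=
  dsumList k n ε (L.map fun q => intervalRep k n ε q.1 q.2)

/-- The direct sum `⊕ₛ M̄(iₛ, jₛ)` of the corresponding interval representations of the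
subdivided quiver `Q̄` (of type `A_{2n+3}`, with vertex `v ∈ (1/2)ℤ` encoded as `2v−1`). -/
def TQbar (k : Type) [Field k] (n : ℕ) (ε : ℕ → Bool) (L : List (ℕ × ℕ)) :
    ARep k (2 * n + 1) (barε ε) :=
  dsumList k (2 * n + 1) (barε ε)
    (L.map fun q => intervalRep k (2 * n + 1) (barε ε) (2 * q.1 - 1) (2 * q.2 - 1))

/-!
In each representation `M̄(i, j)`, the composite `V → W → U` along a subdivided arrow is a
surjection onto the space `W` at the new vertex followed by an injection, and this property passes
to direct sums.  Compatible maps on `V` and on `U` therefore have a unique diagonal fill-in on `W`,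
so that a morphism between such representations of `Q̄` is the same thing as a morphism between
their restrictions to the old vertices.  Restriction being functorial and `k`-linear, it is an
isomorphism of endomorphism algebras.
-/

theorem exists_diagonal_fill {R V W U V' W' U' : Type*} [Semiring R]
    [AddCommMonoid V] [AddCommMonoid W] [AddCommMonoid U]
    [AddCommMonoid V'] [AddCommMonoid W'] [AddCommMonoid U']
    [Module R V] [Module R W] [Module R U] [Module R V'] [Module R W'] [Module R U']
    {p : V →ₗ[R] W} {q : W →ₗ[R] U} {p' : V' →ₗ[R] W'} {q' : W' →ₗ[R] U'}
    (hp : Function.Surjective p) (hq' : Function.Injective q')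
    {a : V →ₗ[R] V'} {b : U →ₗ[R] U'} (h : ∀ v, b (q (p v)) = q' (p' (a v))) :
    ∃ g : W →ₗ[R] W', (∀ v, g (p v) = p' (a v)) ∧ ∀ w, b (q w) = q' (g w) := by
  have mem_range (w : W) : (b ∘ₗ q) w ∈ LinearMap.range q' := by
    obtain ⟨v, rfl⟩ := hp w
    exact ⟨p' (a v), (h v).symm⟩
  let g : W →ₗ[R] W' :=
    (LinearEquiv.ofInjective q' hq').symm ∘ₗ (b ∘ₗ q).codRestrict (LinearMap.range q') mem_range
  have q'_g (w : W) : q' (g w) = b (q w) :=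
    congrArg Subtype.val ((LinearEquiv.ofInjective q' hq').apply_symm_apply ⟨_, mem_range w⟩)
  exact ⟨g, fun v => hq' ((q'_g (p v)).trans (h v)), fun w => (q'_g w).symm⟩

theorem barε_odd (ε : ℕ → Bool) (j : ℕ) : barε ε (2 * j + 1) = ε (j + 1) := by
  unfold barε; congr 1; omega

theorem barε_even (ε : ℕ → Bool) (j : ℕ) : barε ε (2 * j + 2) = ε (j + 1) := by
  unfold barε; congr 1; omega

section Subdivision

variable {k : Type} [Field k] {n m : ℕ} {ε : ℕ → Bool}

theorem ARep.subsingleton_zero (M : ARep k n ε) : Subsingleton (M.V 0) :=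
  subsingleton_of_forall_eq 0 (M.triv 0 (Or.inl rfl))

theorem ARep.Hom.ext_succ {M M' : ARep k n ε} {f g : M.Hom M'}
    (h : ∀ j v, f.app (j + 1) v = g.app (j + 1) v) : f = g := by
  ext x v
  cases x with
  | zero => exact M'.subsingleton_zero.elim _ _
  | succ j => exact h j v

/-- The action of the path `2j+1 → 2j+2 → 2j+3`, which for a representation of `Q̄` is the
subdivision of a (possible) arrow `j+1 → j+2` of `Q`. -/
def ARep.pathFwd (N : ARep k n ε) (j : ℕ) : N.V (2 * j + 1) →ₗ[k] N.V (2 * (j + 1) + 1) :=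
  N.fwd (2 * j + 2) ∘ₗ N.fwd (2 * j + 1)

/-- The action of the path `2j+3 → 2j+2 → 2j+1`, which for a representation of `Q̄` is the
subdivision of a (possible) arrow `j+2 → j+1` of `Q`. -/
def ARep.pathBwd (N : ARep k n ε) (j : ℕ) : N.V (2 * (j + 1) + 1) →ₗ[k] N.V (2 * j + 1) :=
  N.bwd (2 * j + 1) ∘ₗ N.bwd (2 * j + 2)

theorem ARep.Hom.comm_pathFwd {N N' : ARep k n ε} (f : N.Hom N') (j : ℕ) (v : N.V (2 * j + 1)) :
    f.app (2 * (j + 1) + 1) (N.pathFwd j v) = N'.pathFwd j (f.app (2 * j + 1) v) :=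
  (f.comm_fwd (2 * j + 2) _).trans (congrArg _ (f.comm_fwd (2 * j + 1) v))

theorem ARep.Hom.comm_pathBwd {N N' : ARep k n ε} (f : N.Hom N') (j : ℕ)
    (v : N.V (2 * (j + 1) + 1)) :
    f.app (2 * j + 1) (N.pathBwd j v) = N'.pathBwd j (f.app (2 * (j + 1) + 1) v) :=
  (f.comm_bwd (2 * j + 1) _).trans (congrArg _ (f.comm_bwd (2 * j + 2) v))

/-- `N` is a subdivision of `M`: the restriction of `N` to the old vertices is identified with `M`,
and each new vertex carries the image of the structure map of the arrow it subdivides.  The old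
vertex `j + 1` of `Q` is the vertex `2j + 1` of `Q̄`; the new vertex `2j + 2` lies on the arrow
between `j + 1` and `j + 2`. -/
structure Subdivision (M : ARep k n ε) (N : ARep k m (barε ε)) where
  equiv : ∀ j, M.V (j + 1) ≃ₗ[k] N.V (2 * j + 1)
  equiv_fwd : ∀ j v, equiv (j + 1) (M.fwd (j + 1) v) = N.pathFwd j (equiv j v)
  equiv_bwd : ∀ j v, equiv j (M.bwd (j + 1) v) = N.pathBwd j (equiv (j + 1) v)
  fwd_surjective : ∀ j, ε (j + 1) = true → Function.Surjective (N.fwd (2 * j + 1))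
  fwd_injective : ∀ j, ε (j + 1) = true → Function.Injective (N.fwd (2 * j + 2))
  bwd_surjective : ∀ j, ε (j + 1) = false → Function.Surjective (N.bwd (2 * j + 2))
  bwd_injective : ∀ j, ε (j + 1) = false → Function.Injective (N.bwd (2 * j + 1))

namespace Subdivision

variable {M M' M'' : ARep k n ε} {N N' N'' : ARep k m (barε ε)}

/-- Restriction of a morphism between subdivisions to the old vertices.  The index `0` is not a
vertex, and every representation vanishes there. -/
def restrict (S : Subdivision M N) (S' : Subdivision M' N') (f : N.Hom N') : M.Hom M' where
  app
    | 0 => 0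
    | j + 1 => (S'.equiv j).symm ∘ₗ f.app (2 * j + 1) ∘ₗ S.equiv j
  comm_fwd i v := by
    cases i with
    | zero => simp only [M.subsingleton_zero.elim v 0, map_zero]
    | succ j => simp [LinearEquiv.symm_apply_eq, equiv_fwd, f.comm_pathFwd]
  comm_bwd i v := by
    cases i with
    | zero => exact M'.subsingleton_zero.elim _ _
    | succ j => simp [LinearEquiv.symm_apply_eq, equiv_bwd, f.comm_pathBwd]

theorem restrict_app_succ (S : Subdivision M N) (S' : Subdivision M' N') (f : N.Hom N') (j : ℕ)
    (v : M.V (j + 1)) :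
    (S.restrict S' f).app (j + 1) v = (S'.equiv j).symm (f.app (2 * j + 1) (S.equiv j v)) :=
  rfl

theorem restrict_add (S : Subdivision M N) (S' : Subdivision M' N') (f g : N.Hom N') :
    S.restrict S' (f.add g) = (S.restrict S' f).add (S.restrict S' g) :=
  ARep.Hom.ext_succ fun j _ => map_add (S'.equiv j).symm _ _

theorem restrict_smul (S : Subdivision M N) (S' : Subdivision M' N') (c : k) (f : N.Hom N') :
    S.restrict S' (f.smul c) = (S.restrict S' f).smul c :=
  ARep.Hom.ext_succ fun j _ => map_smul (S'.equiv j).symm _ _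

theorem restrict_comp (S : Subdivision M N) (S' : Subdivision M' N') (S'' : Subdivision M'' N'')
    (g : N'.Hom N'') (f : N.Hom N') :
    S.restrict S'' (g.comp f) = (S'.restrict S'' g).comp (S.restrict S' f) :=
  ARep.Hom.ext_succ fun _ _ => by simp [restrict_app_succ, ARep.Hom.comp]

theorem restrict_id (S : Subdivision M N) : S.restrict S (.id N) = .id M :=
  ARep.Hom.ext_succ fun j v => (S.equiv j).symm_apply_apply v

theorem restrict_injective (S : Subdivision M N) (S' : Subdivision M' N') :
    Function.Injective (S.restrict S') := by
  intro f g hfg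
  have eq_old (j : ℕ) (v : N.V (2 * j + 1)) : f.app (2 * j + 1) v = g.app (2 * j + 1) v := by
    obtain ⟨w, rfl⟩ := (S.equiv j).surjective v
    apply (S'.equiv j).symm.injective
    rw [← restrict_app_succ, hfg, restrict_app_succ]
  have eq_new (j : ℕ) (v : N.V (2 * j + 2)) : f.app (2 * j + 2) v = g.app (2 * j + 2) v := by
    cases hε : ε (j + 1) with
    | true =>
      obtain ⟨w, rfl⟩ := S.fwd_surjective j hε v
      rw [f.comm_fwd, g.comm_fwd, eq_old]
    | false =>
      obtain ⟨w, rfl⟩ := S.bwd_surjective j hε v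
      exact (f.comm_bwd _ w).trans
        ((congrArg (N'.bwd _) (eq_old (j + 1) w)).trans (g.comm_bwd _ w).symm)
  refine ARep.Hom.ext_succ fun i v => ?_
  obtain ⟨j, rfl | rfl⟩ := i.even_or_odd'
  exacts [eq_old j v, eq_new j v]

/-- A morphism `f : M → M'`, transported to the old vertex `2j + 1`. -/
def transport (S : Subdivision M N) (S' : Subdivision M' N') (f : M.Hom M') (j : ℕ) :
    N.V (2 * j + 1) →ₗ[k] N'.V (2 * j + 1) :=
  S'.equiv j ∘ₗ f.app (j + 1) ∘ₗ (S.equiv j).symm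

theorem transport_equiv (S : Subdivision M N) (S' : Subdivision M' N') (f : M.Hom M') (j : ℕ)
    (v : M.V (j + 1)) :
    S.transport S' f j (S.equiv j v) = S'.equiv j (f.app (j + 1) v) := by
  simp [transport]

theorem transport_pathFwd (S : Subdivision M N) (S' : Subdivision M' N') (f : M.Hom M') (j : ℕ)
    (v : N.V (2 * j + 1)) :
    S.transport S' f (j + 1) (N.pathFwd j v) = N'.pathFwd j (S.transport S' f j v) := by
  obtain ⟨w, rfl⟩ := (S.equiv j).surjective v
  rw [← S.equiv_fwd, transport_equiv, f.comm_fwd, S'.equiv_fwd, transport_equiv]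

theorem transport_pathBwd (S : Subdivision M N) (S' : Subdivision M' N') (f : M.Hom M') (j : ℕ)
    (v : N.V (2 * (j + 1) + 1)) :
    S.transport S' f j (N.pathBwd j v) = N'.pathBwd j (S.transport S' f (j + 1) v) := by
  obtain ⟨w, rfl⟩ := (S.equiv (j + 1)).surjective v
  rw [← S.equiv_bwd, transport_equiv, f.comm_bwd, S'.equiv_bwd, transport_equiv]

theorem exists_fill_new_vertex (S : Subdivision M N) (S' : Subdivision M' N') (f : M.Hom M')
    (j : ℕ) :
    ∃ g : N.V (2 * j + 2) →ₗ[k] N'.V (2 * j + 2),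
      (∀ v, g (N.fwd (2 * j + 1) v) = N'.fwd (2 * j + 1) (S.transport S' f j v)) ∧
      (∀ v, S.transport S' f (j + 1) (N.fwd (2 * j + 2) v) = N'.fwd (2 * j + 2) (g v)) ∧
      (∀ v, S.transport S' f j (N.bwd (2 * j + 1) v) = N'.bwd (2 * j + 1) (g v)) ∧
      (∀ v, g (N.bwd (2 * j + 2) v) = N'.bwd (2 * j + 2) (S.transport S' f (j + 1) v)) := by
  cases hε : ε (j + 1) with
  | true =>
    have bwd_eq_zero (K : ARep k m (barε ε)) : K.bwd (2 * j + 1) = 0 ∧ K.bwd (2 * j + 2) = 0 :=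
      ⟨K.bwd_zero _ ((barε_odd ε j).trans hε), K.bwd_zero _ ((barε_even ε j).trans hε)⟩
    obtain ⟨g, hg, hg'⟩ := exists_diagonal_fill (S.fwd_surjective j hε) (S'.fwd_injective j hε)
      (S.transport_pathFwd S' f j)
    exact ⟨g, hg, hg', by simp [bwd_eq_zero], by simp [bwd_eq_zero]⟩
  | false =>
    have fwd_eq_zero (K : ARep k m (barε ε)) : K.fwd (2 * j + 1) = 0 ∧ K.fwd (2 * j + 2) = 0 :=
      ⟨K.fwd_zero _ ((barε_odd ε j).trans hε), K.fwd_zero _ ((barε_even ε j).trans hε)⟩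
    obtain ⟨g, hg, hg'⟩ := exists_diagonal_fill (S.bwd_surjective j hε) (S'.bwd_injective j hε)
      (S.transport_pathBwd S' f j)
    exact ⟨g, by simp [fwd_eq_zero], by simp [fwd_eq_zero], hg', hg⟩

theorem restrict_surjective (S : Subdivision M N) (S' : Subdivision M' N') :
    Function.Surjective (S.restrict S') := by
  intro f
  choose g g_fwd fwd_g bwd_g g_bwd using S.exists_fill_new_vertex S' f
  let app : ∀ x, N.V x →ₗ[k] N'.V x := Nat.evenOddRec 0
    (fun | 0, _ => 0 | j + 1, _ => g j)
    (fun j _ => S.transport S' f j)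
  have app_old (j : ℕ) : app (2 * j + 1) = S.transport S' f j := Nat.evenOddRec_odd _ _ _ rfl j
  have app_new (j : ℕ) : app (2 * j + 2) = g j := Nat.evenOddRec_even _ _ _ rfl (j + 1)
  let F : N.Hom N' :=
    { app
      comm_fwd := fun
        | 0, v => by simp only [N.subsingleton_zero.elim v 0, map_zero]
        | i + 1, v => by
          obtain ⟨j, rfl | rfl⟩ := i.even_or_odd'
          · rw [app_old, app_new, g_fwd]
          · exact (LinearMap.congr_fun (app_old (j + 1)) _).trans
              ((fwd_g j v).trans (congrArg _ (LinearMap.congr_fun (app_new j) v).symm))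
      comm_bwd := fun
        | 0, v => N'.subsingleton_zero.elim _ _
        | i + 1, v => by
          obtain ⟨j, rfl | rfl⟩ := i.even_or_odd'
          · rw [app_old, app_new, bwd_g]
          · exact (LinearMap.congr_fun (app_new j) _).trans
              ((g_bwd j v).trans (congrArg _ (LinearMap.congr_fun (app_old (j + 1)) v).symm)) }
  refine ⟨F, ARep.Hom.ext_succ fun j v => ?_⟩
  rw [restrict_app_succ, LinearEquiv.symm_apply_eq, ← transport_equiv]
  exact LinearMap.congr_fun (app_old j) _

/-- Restriction to the old vertices is fully faithful. -/
def homEquiv (S : Subdivision M N) (S' : Subdivision M' N') : N.Hom N' ≃ M.Hom M' :=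
  .ofBijective (S.restrict S') ⟨S.restrict_injective S', S.restrict_surjective S'⟩

/-- A direct sum of subdivisions is a subdivision of the direct sum. -/
def dsum (S : Subdivision M N) (S' : Subdivision M' N') :
    Subdivision (M.dsum M') (N.dsum N') where
  equiv j := (S.equiv j).prodCongr (S'.equiv j)
  equiv_fwd j v := Prod.ext (S.equiv_fwd j v.1) (S'.equiv_fwd j v.2)
  equiv_bwd j v := Prod.ext (S.equiv_bwd j v.1) (S'.equiv_bwd j v.2)
  fwd_surjective j h := (S.fwd_surjective j h).prodMap (S'.fwd_surjective j h)
  fwd_injective j h := (S.fwd_injective j h).prodMap (S'.fwd_injective j h)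
  bwd_surjective j h := (S.bwd_surjective j h).prodMap (S'.bwd_surjective j h)
  bwd_injective j h := (S.bwd_injective j h).prodMap (S'.bwd_injective j h)

end Subdivision

theorem fiber_subsingleton {P : Prop} (h : ¬P) : Subsingleton (fiber k P) := by
  rw [fiber, if_neg h]
  infer_instance

theorem coe_fiberMap (P Q : Prop) (v : fiber k P) :
    (fiberMap k P Q v : k) = if Q then (v : k) else 0 := by
  by_cases hP : P
  · by_cases hQ : Q <;> simp [fiberMap, hP, hQ]
  · simp [(fiber_subsingleton hP).elim v 0]

theorem fiberMap_fiberMap {P Q R : Prop} (h : P → R → Q) (v : fiber k P) :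
    fiberMap k Q R (fiberMap k P Q v) = fiberMap k P R v := by
  by_cases hP : P
  · ext
    grind [coe_fiberMap]
  · simp [(fiber_subsingleton hP).elim v 0]

theorem fiberMap_self (P : Prop) (v : fiber k P) : fiberMap k P P v = v := by
  by_cases hP : P
  · ext
    simp [coe_fiberMap, hP]
  · exact (fiber_subsingleton hP).elim _ _

theorem fiberMap_surjective {P Q : Prop} (h : Q → P) : Function.Surjective (fiberMap k P Q) :=
  fun v => ⟨fiberMap k Q P v, by rw [fiberMap_fiberMap fun q _ => h q, fiberMap_self]⟩

theorem fiberMap_injective {P Q : Prop} (h : P → Q) : Function.Injective (fiberMap k P Q) :=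
  Function.LeftInverse.injective (g := fiberMap k Q P) fun v => by
    rw [fiberMap_fiberMap fun p _ => h p, fiberMap_self]

theorem intervalRep_fwd (n i j : ℕ) {ℓ : ℕ} (h : ε ℓ = true) :
    (intervalRep k n ε i j).fwd ℓ = fiberMap k (SuppCond n i j ℓ) (SuppCond n i j (ℓ + 1)) :=
  if_pos h

theorem intervalRep_bwd (n i j : ℕ) {ℓ : ℕ} (h : ε ℓ = false) :
    (intervalRep k n ε i j).bwd ℓ = fiberMap k (SuppCond n i j (ℓ + 1)) (SuppCond n i j ℓ) :=
  if_neg (by simp [h])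

theorem suppCond_bar_odd (n a b j : ℕ) :
    SuppCond (2 * n + 1) (2 * a - 1) (2 * b - 1) (2 * j + 1) ↔ SuppCond n a b (j + 1) := by
  simp only [SuppCond]; omega

theorem suppCond_bar_even (n a b j : ℕ) :
    SuppCond (2 * n + 1) (2 * a - 1) (2 * b - 1) (2 * j + 2) ↔
      SuppCond (2 * n + 1) (2 * a - 1) (2 * b - 1) (2 * j + 1) ∧
        SuppCond (2 * n + 1) (2 * a - 1) (2 * b - 1) (2 * (j + 1) + 1) := by
  simp only [SuppCond]; omega

/-- The identification of the fibers of two equivalent conditions. -/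
def fiberEquiv {P Q : Prop} (h : P ↔ Q) : fiber k P ≃ₗ[k] fiber k Q :=
  .ofBijective (fiberMap k P Q) ⟨fiberMap_injective h.mp, fiberMap_surjective h.mpr⟩

theorem fiberEquiv_fiberMap {P Q P' Q' R : Prop} (hP : P ↔ P') (hQ : Q ↔ Q') (hR : R ↔ P' ∧ Q')
    (v : fiber k P) :
    fiberEquiv hQ (fiberMap k P Q v) = fiberMap k R Q' (fiberMap k P' R (fiberEquiv hP v)) := by
  change fiberMap k Q Q' (fiberMap k P Q v) =
    fiberMap k R Q' (fiberMap k P' R (fiberMap k P P' v))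
  rw [fiberMap_fiberMap fun _ q => hQ.mpr q, fiberMap_fiberMap fun p' q => hR.mpr ⟨p', q⟩,
    fiberMap_fiberMap fun p _ => hP.mp p]

/-- `M̄(a, b)` is a subdivision of `M(a, b)`. -/
def Subdivision.interval (k : Type) [Field k] (n : ℕ) (ε : ℕ → Bool) (a b : ℕ) :
    Subdivision (intervalRep k n ε a b)
      (intervalRep k (2 * n + 1) (barε ε) (2 * a - 1) (2 * b - 1)) where
  equiv j := fiberEquiv (suppCond_bar_odd n a b j).symm
  equiv_fwd j v := by
    cases hε : ε (j + 1) with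
    | true =>
      rw [ARep.pathFwd, intervalRep_fwd _ _ _ hε, intervalRep_fwd _ _ _ ((barε_odd ε j).trans hε),
        intervalRep_fwd _ _ _ ((barε_even ε j).trans hε)]
      exact fiberEquiv_fiberMap _ _ (suppCond_bar_even n a b j) v
    | false =>
      rw [ARep.pathFwd, ARep.fwd_zero _ _ hε, ARep.fwd_zero _ _ ((barε_even ε j).trans hε)]
      exact map_zero (fiberEquiv (k := k) (suppCond_bar_odd n a b (j + 1)).symm)
  equiv_bwd j v := by
    cases hε : ε (j + 1) with
    | true =>
      rw [ARep.pathBwd, ARep.bwd_zero _ _ hε, ARep.bwd_zero _ _ ((barε_odd ε j).trans hε)]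
      exact map_zero (fiberEquiv (k := k) (suppCond_bar_odd n a b j).symm)
    | false =>
      rw [ARep.pathBwd, intervalRep_bwd _ _ _ hε, intervalRep_bwd _ _ _ ((barε_odd ε j).trans hε),
        intervalRep_bwd _ _ _ ((barε_even ε j).trans hε)]
      exact fiberEquiv_fiberMap _ _ ((suppCond_bar_even n a b j).trans and_comm) v
  fwd_surjective j h := by
    rw [intervalRep_fwd _ _ _ ((barε_odd ε j).trans h)]
    exact fiberMap_surjective fun hx => ((suppCond_bar_even n a b j).mp hx).1
  fwd_injective j h := by
    rw [intervalRep_fwd _ _ _ ((barε_even ε j).trans h)]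
    exact fiberMap_injective fun hx => ((suppCond_bar_even n a b j).mp hx).2
  bwd_surjective j h := by
    rw [intervalRep_bwd _ _ _ ((barε_even ε j).trans h)]
    exact fiberMap_surjective fun hx => ((suppCond_bar_even n a b j).mp hx).2
  bwd_injective j h := by
    rw [intervalRep_bwd _ _ _ ((barε_odd ε j).trans h)]
    exact fiberMap_injective fun hx => ((suppCond_bar_even n a b j).mp hx).1

/-- The zero representation of `Q̄` is a subdivision of the zero representation of `Q`. -/
def Subdivision.zero (k : Type) [Field k] (n m : ℕ) (ε : ℕ → Bool) :
    Subdivision (zeroRep k n ε) (zeroRep k m (barε ε)) :=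
  have : Subsingleton (fiber k False) := fiber_subsingleton id
  { equiv := fun _ => LinearEquiv.refl k _
    equiv_fwd := fun _ _ => rfl
    equiv_bwd := fun _ _ => rfl
    fwd_surjective := fun _ _ v => ⟨v, this.elim _ _⟩
    fwd_injective := fun _ _ _ _ _ => this.elim _ _
    bwd_surjective := fun _ _ v => ⟨v, this.elim _ _⟩
    bwd_injective := fun _ _ _ _ _ => this.elim _ _ }

theorem nonempty_subdivision_dsumList {Ms : List (ARep k n ε)} {Ns : List (ARep k m (barε ε))}
    (h : List.Forall₂ (fun M N => Nonempty (Subdivision M N)) Ms Ns) :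
    Nonempty (Subdivision (dsumList k n ε Ms) (dsumList k m (barε ε) Ns)) := by
  induction h with
  | nil => exact ⟨.zero k n m ε⟩
  | cons hMN _ ih => exact hMN.elim fun S => ih.elim fun S' => ⟨S.dsum S'⟩

theorem nonempty_subdivision_TQ (k : Type) [Field k] (n : ℕ) (ε : ℕ → Bool) (L : List (ℕ × ℕ)) :
    Nonempty (Subdivision (TQ k n ε L) (TQbar k n ε L)) := by
  apply nonempty_subdivision_dsumList
  simp only [List.forall₂_map_left_iff, List.forall₂_map_right_iff, List.forall₂_same]
  exact fun q _ => ⟨.interval k n ε q.1 q.2⟩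

end Subdivision

/-- `End_{rep Q}(⊕ M(iₛ,jₛ)) ≅ End_{rep Q̄}(⊕ M̄(iₛ,jₛ))` as `k`-algebras:
there is a bijection between the endomorphism spaces preserving addition, scalar
multiplication, composition and the identity. -/
theorem stmt_18 (k : Type) [Field k] (n : ℕ) (ε : ℕ → Bool) (L : List (ℕ × ℕ))
    (hL : ∀ e ∈ L, 1 ≤ e.1 ∧ e.1 ≤ e.2 ∧ e.2 ≤ n + 2) :
    ∃ e : ((TQ k n ε L).Hom (TQ k n ε L)) ≃ ((TQbar k n ε L).Hom (TQbar k n ε L)),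
      (∀ f g, e (f.add g) = (e f).add (e g)) ∧
      (∀ (c : k) f, e (ARep.Hom.smul c f) = ARep.Hom.smul c (e f)) ∧
      (∀ f g, e (f.comp g) = (e f).comp (e g)) ∧
      e (ARep.Hom.id (TQ k n ε L)) = ARep.Hom.id (TQbar k n ε L) := by
  obtain ⟨S⟩ := nonempty_subdivision_TQ k n ε L
  have restrict_symm (f) : S.restrict S ((S.homEquiv S).symm f) = f :=
    (S.homEquiv S).apply_symm_apply f
  refine ⟨(S.homEquiv S).symm, fun f g => ?_, fun c f => ?_, fun f g => ?_, ?_⟩ <;>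
    apply S.restrict_injective S
  · simp only [restrict_symm, S.restrict_add]
  · simp only [restrict_symm, S.restrict_smul]
  · simp only [restrict_symm, S.restrict_comp S]
  · rw [restrict_symm, S.restrict_id]

end CambrianA
end
end
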